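/- Let Ω ⊂ ℂ be a bounded domain containing 0 whose boundary is an analytic Jordan curve, let u be a negative continuous subharmonic exhaustion of Ω with finite Monge–Ampère mass, and let 1 ≤ p < ∞. A function f ∈ H^p(Ω) belongs to H^p_u(Ω) if and only if its nontangential boundary value function f* belongs to L^p(μ_u), where μ_u is the boundary Monge–Ampère measure of u; moreover ‖f*‖_{L^p(μ_u)} = ‖f‖_{H^p_u(Ω)}. -/

import Mathlib

open MeasureTheory Filter Metric Complex Set
open scoped Real ENNReal Topology

noncomputable section

/-- The Laplacian of a real-valued function on `ℂ ≅ ℝ²`. -/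
def lap (φ : ℂ → ℝ) (z : ℂ) : ℝ :=
  fderiv ℝ (fun w => fderiv ℝ φ w 1) z 1 +
    fderiv ℝ (fun w => fderiv ℝ φ w Complex.I) z Complex.I

/-- `h` is harmonic on `s`. -/
def HarmonicOn (h : ℂ → ℝ) (s : Set ℂ) : Prop :=
  ContDiffOn ℝ 2 h s ∧ ∀ z ∈ s, lap h z = 0

/-- `u` is subharmonic on `s` (continuous with the sub-mean-value property). -/
def SubharmonicOn (u : ℂ → ℝ) (s : Set ℂ) : Prop :=
  ContinuousOn u s ∧ ∀ z ∈ s, ∀ r : ℝ, 0 < r → closedBall z r ⊆ s →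
    u z ≤ (2 * Real.pi)⁻¹ *
      ∫ t in (0:ℝ)..(2 * Real.pi), u (z + (r : ℂ) * Complex.exp ((t : ℂ) * Complex.I))

/-- `u` is a negative continuous subharmonic exhaustion function for `Ω`:
sublevel sets `{u < c}`, `c < 0`, are relatively compact in `Ω`. -/
structure IsExhaustion (u : ℂ → ℝ) (Ω : Set ℂ) : Prop where
  neg : ∀ z ∈ Ω, u z < 0
  subh : SubharmonicOn u Ω
  exh : ∀ c : ℝ, c < 0 → IsCompact (closure {z | z ∈ Ω ∧ u z < c}) ∧
    closure {z | z ∈ Ω ∧ u z < c} ⊆ Ω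

/-- `ν` is the Riesz measure `dd^c u = (1/4) Δu dA` of `u` on `Ω`, characterized
distributionally: `∫ φ dν = (1/4) ∫_Ω u Δφ dA` for test functions `φ`. -/
def IsRieszMeasure (u : ℂ → ℝ) (Ω : Set ℂ) (ν : Measure ℂ) : Prop :=
  ν Ωᶜ = 0 ∧
  ∀ φ : ℂ → ℝ, ContDiff ℝ 2 φ → HasCompactSupport φ → tsupport φ ⊆ Ω →
    ∫ z, φ z ∂ν = (4 : ℝ)⁻¹ * ∫ z in Ω, u z * lap φ z

/-- `μ` is the Monge–Ampère measure `μ_{u,r} = dd^c max(u,r) - χ_{Ω∖{u<r}} dd^c u`,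
where `ν = dd^c u`. -/
def IsMAMeasure (u : ℂ → ℝ) (Ω : Set ℂ) (ν : Measure ℂ) (r : ℝ) (μ : Measure ℂ) : Prop :=
  ∃ νr : Measure ℂ, IsRieszMeasure (fun z => max (u z) r) Ω νr ∧
    μ = νr - ν.restrict {z | z ∈ Ω ∧ r ≤ u z}

/-- The `p`-th power of the Poletsky–Stessin Hardy "norm",
`limsup_{r→0⁻} ∫ |f|^p dμ_{u,r}`. -/
def psNormPow (p : ℝ) (μfam : ℝ → Measure ℂ) (f : ℂ → ℂ) : ℝ≥0∞ :=
  Filter.limsup (fun r => ∫⁻ z, ENNReal.ofReal (‖f z‖ ^ p) ∂(μfam r))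
    (nhdsWithin 0 (Set.Iio 0))

/-- The Poletsky–Stessin Hardy norm. -/
def psNorm (p : ℝ) (μfam : ℝ → Measure ℂ) (f : ℂ → ℂ) : ℝ≥0∞ :=
  psNormPow p μfam f ^ (1 / p)

/-- Membership in the Poletsky–Stessin Hardy space `H^p_u(Ω)`, where `μfam r = μ_{u,r}`. -/
def MemPS (p : ℝ) (Ω : Set ℂ) (μfam : ℝ → Measure ℂ) (f : ℂ → ℂ) : Prop :=
  DifferentiableOn ℂ f Ω ∧ psNormPow p μfam f < ⊤

/-- Membership in the classical Hardy space `H^p(Ω)`: `|f|^p` has a harmonic majorant. -/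
def MemHClassical (p : ℝ) (Ω : Set ℂ) (f : ℂ → ℂ) : Prop :=
  DifferentiableOn ℂ f Ω ∧
    ∃ h : ℂ → ℝ, HarmonicOn h Ω ∧ ∀ z ∈ Ω, ‖f z‖ ^ p ≤ h z

/-- A bounded domain in `ℂ` containing `0` whose boundary is an analytic Jordan curve:
there is a conformal map of the unit disc onto `Ω` extending analytically and injectively
across the closed disc, carrying the unit circle onto the boundary of `Ω`. -/
structure AnalyticJordanDomain (Ω : Set ℂ) : Prop where
  isOpen : IsOpen Ω
  isConnected : IsConnected Ω
  isBounded : Bornology.IsBounded Ω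
  zero_mem : (0:ℂ) ∈ Ω
  analyticBoundary : ∃ (U : Set ℂ) (ψ : ℂ → ℂ), IsOpen U ∧ closedBall (0:ℂ) 1 ⊆ U ∧
    DifferentiableOn ℂ ψ U ∧ Set.InjOn ψ U ∧ ψ '' ball (0:ℂ) 1 = Ω ∧
    ψ '' sphere (0:ℂ) 1 = frontier Ω

/-- `μ` is the boundary Monge–Ampère measure: the weak* limit of the measures
`μfam r = μ_{u,r}` as `r → 0⁻`. -/
def IsBoundaryMA (μfam : ℝ → Measure ℂ) (μ : Measure ℂ) : Prop :=
  ∀ φ : ℂ → ℝ, Continuous φ →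
    Filter.Tendsto (fun r => ∫ z, φ z ∂(μfam r)) (nhdsWithin 0 (Set.Iio 0))
      (nhds (∫ z, φ z ∂μ))

/-- `f` has nontangential limit `L` at the boundary point `ξ` of `Ω`. -/
def NTLim (Ω : Set ℂ) (f : ℂ → ℂ) (ξ : ℂ) (L : ℂ) : Prop :=
  ∀ C : ℝ, 1 < C →
    Filter.Tendsto f
      (nhdsWithin ξ {z | z ∈ Ω ∧ dist z ξ ≤ C * infDist z (frontier Ω)}) (nhds L)

/-- Arc length measure on the boundary of `Ω` (1-dimensional Hausdorff measure). -/
def arcLen (Ω : Set ℂ) : Measure ℂ := (μH[1] : Measure ℂ).restrict (frontier Ω)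


section

/-- local sub-mean value property -/
def LS (w : ℂ → ℝ) (U : Set ℂ) : Prop :=
  ∀ z ∈ U, ∀ᶠ ρ in 𝓝[>] (0:ℝ), w z ≤ Real.circleAverage w z ρ

lemma circ_sq (c z : ℂ) (ρ : ℝ) :
    Real.circleAverage (fun x => ‖x - c‖ ^ 2) z ρ = ‖z - c‖ ^ 2 + ρ ^ 2 := by
  have h : ∀ t : ℝ, ‖circleMap z ρ t - c‖ ^ 2 =
      (‖z - c‖ ^ 2 + ρ ^ 2) + 2 * ρ * ((z - c).re * Real.cos t + (z - c).im * Real.sin t) := by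
    intro t
    rw [← Complex.normSq_eq_norm_sq, ← Complex.normSq_eq_norm_sq]
    simp only [circleMap, Complex.normSq_apply, Complex.sub_re, Complex.sub_im, Complex.add_re,
      Complex.add_im, Complex.mul_re, Complex.mul_im, Complex.ofReal_re, Complex.ofReal_im,
      Complex.exp_ofReal_mul_I_re, Complex.exp_ofReal_mul_I_im]
    linear_combination ρ ^ 2 * Real.sin_sq_add_cos_sq t
  rw [Real.circleAverage_def]
  simp_rw [h]
  rw [intervalIntegral.integral_add (by simp) (Continuous.intervalIntegrable (by fun_prop) _ _),
    intervalIntegral.integral_const_mul, intervalIntegral.integral_add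
      (Continuous.intervalIntegrable (by fun_prop) _ _)
      (Continuous.intervalIntegrable (by fun_prop) _ _)]
  simp
  field_simp

lemma maxprin {w : ℂ → ℝ} {c : ℂ} {R : ℝ} (hR : 0 < R)
    (hc : ContinuousOn w (closedBall c R)) (hw : LS w (ball c R))
    (hb : ∀ z ∈ sphere c R, w z ≤ 0) : ∀ z ∈ closedBall c R, w z ≤ 0 := by
  have key : ∀ ε > 0, ∀ z ∈ closedBall c R, w z ≤ ε * R ^ 2 := by
    intro ε hε z hz
    let g : ℂ → ℝ := fun x => w x + ε * ‖x - c‖ ^ 2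
    have hg : ContinuousOn g (closedBall c R) := hc.add (by fun_prop)
    obtain ⟨x, hx, hmax⟩ := (isCompact_closedBall c R).exists_isMaxOn ⟨z, hz⟩ hg
    have hxs : x ∈ sphere c R := by
      by_contra hns
      have hxb : x ∈ ball c R := by
        rw [mem_ball]; rw [mem_closedBall] at hx; rw [mem_sphere] at hns
        exact lt_of_le_of_ne hx hns
      obtain ⟨δ, hδ, hsub⟩ := Metric.isOpen_iff.1 isOpen_ball x hxb
      have h2 : ∀ᶠ ρ in 𝓝[>] (0:ℝ), ρ < δ ∧ 0 < ρ :=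
        (Ioo_mem_nhdsGT hδ |> fun h => by filter_upwards [h] with a ha using ⟨ha.2, ha.1⟩)
      obtain ⟨ρ, h1, hρδ, hρ⟩ := ((hw x hxb).and h2).exists
      have hsph : sphere x |ρ| ⊆ closedBall c R := by
        rw [abs_of_pos hρ]
        intro y hy
        exact ball_subset_closedBall (hsub (by rw [mem_ball, mem_sphere.1 hy]; exact hρδ))
      have i1 : CircleIntegrable w x ρ := (hc.mono hsph).circleIntegrable'
      have i2 : CircleIntegrable (fun y => ε * ‖y - c‖ ^ 2) x ρ :=
        ContinuousOn.circleIntegrable' (by fun_prop)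
      have e : Real.circleAverage g x ρ =
          Real.circleAverage w x ρ + ε * (‖x - c‖ ^ 2 + ρ ^ 2) := by
        have := Real.circleAverage_fun_add i1 i2
        rw [show g = fun x => w x + ε * ‖x - c‖ ^ 2 from rfl, this, ← circ_sq]
        congr 1
        have := Real.circleAverage_fun_smul (a := ε) (f := fun y : ℂ => ‖y - c‖ ^ 2) (c := x) (R := ρ)
        simpa using this
      have le : Real.circleAverage g x ρ ≤ g x :=
        Real.circleAverage_mono_on_of_le_circle ((hg.mono hsph).circleIntegrable')
          (fun y hy => hmax (hsph hy))
      have : 0 < ε * ρ ^ 2 := by positivity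
      simp only [g] at le e
      nlinarith
    have h1 : g z ≤ g x := hmax hz
    have h2 := hb x hxs
    have h3 : ‖x - c‖ = R := by rw [← dist_eq_norm]; exact hxs
    simp only [g, h3] at h1
    have : 0 ≤ ε * ‖z - c‖ ^ 2 := by positivity
    linarith
  intro z hz
  by_contra hn
  push Not at hn
  have := key (w z / (2 * R ^ 2)) (by positivity) z hz
  have : w z / (2 * R ^ 2) * R ^ 2 = w z / 2 := by field_simp
  linarith

/-- Poisson integral -/
def Pz (R : ℝ) (φ : ℂ → ℝ) (z : ℂ) : ℝ := Real.circleAverage (poissonKernel 0 z • φ) 0 R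

lemma pk_cont {R : ℝ} {z : ℂ} (hz : z ∈ ball (0:ℂ) R) :
    ContinuousOn (poissonKernel 0 z) (sphere 0 |R|) := by
  have : poissonKernel 0 z = Complex.re ∘ herglotzRieszKernel 0 z :=
    poissonKernel_eq_re_herglotzRieszKernel
  rw [this]
  exact Complex.continuous_re.comp_continuousOn (continuousOn_herglotzRieszKernel_sphere hz)

lemma pk_nonneg {R : ℝ} {z ζ : ℂ} (hz : z ∈ ball (0:ℂ) R) (hζ : ζ ∈ sphere (0:ℂ) |R|) :
    0 ≤ poissonKernel 0 z ζ := by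
  rw [poissonKernel_def]
  have h1 : ‖z‖ < R := by simpa using hz
  have h2 : ‖ζ‖ = |R| := by simpa using hζ
  have := le_abs_self R
  have : ‖z‖ ^ 2 ≤ ‖ζ‖ ^ 2 := by gcongr; linarith
  simp only [sub_zero]
  apply div_nonneg (by linarith) (by positivity)

lemma Pz_int {R : ℝ} {φ : ℂ → ℝ} (hφ : CircleIntegrable φ 0 R) {z : ℂ} (hz : z ∈ ball (0:ℂ) R) :
    CircleIntegrable (poissonKernel 0 z • φ) 0 R :=
  hφ.continuousOn_smul (pk_cont hz)

lemma Pz_mono {R : ℝ} {φ χ : ℂ → ℝ} (hφ : CircleIntegrable φ 0 R) (hχ : CircleIntegrable χ 0 R)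
    (h : ∀ ζ ∈ sphere (0:ℂ) |R|, φ ζ ≤ χ ζ) {z : ℂ} (hz : z ∈ ball (0:ℂ) R) :
    Pz R φ z ≤ Pz R χ z := by
  apply Real.circleAverage_mono (Pz_int hφ hz) (Pz_int hχ hz)
  intro x hx
  simp only [Pi.smul_apply', smul_eq_mul]
  exact mul_le_mul_of_nonneg_left (h x hx) (pk_nonneg hz hx)

lemma Pz_analytic {R : ℝ} {φ : ℂ → ℝ} (hφ : CircleIntegrable φ 0 R) :
    ∃ G : ℂ → ℂ, AnalyticOnNhd ℂ G (ball 0 R) ∧ ∀ z ∈ ball (0:ℂ) R, (G z).re = Pz R φ z := by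
  have h₁ : CircleIntegrable (fun ζ ↦ (φ ζ : ℂ)) 0 R := by
    simp only [CircleIntegrable, intervalIntegrable_iff] at hφ ⊢
    exact Complex.ofRealCLM.integrable_comp hφ
  refine ⟨_, analyticOnNhd_circleAverage_herglotzRieszKernel_smul h₁, fun z hz => ?_⟩
  rw [re_circleAverage_herglotzRieszKernel_smul hφ hz, Pz, poissonKernel_eq_re_herglotzRieszKernel]

lemma Pz_re {R : ℝ} {G : ℂ → ℂ} (hG : Differentiable ℂ G) {z : ℂ} (hz : z ∈ ball (0:ℂ) R) :
    Pz R (fun x => (G x).re) z = (G z).re := by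
  apply InnerProductSpace.HarmonicOnNhd.circleAverage_poissonKernel_smul _ hz
  intro x _
  exact AnalyticAt.harmonicAt_re (hG.analyticAt x)

lemma Pz_bdry {R : ℝ} (hR : 0 < R) {φ : ℂ → ℝ} (hφ : ContinuousOn φ (sphere 0 R))
    {ζ : ℂ} (hζ : ζ ∈ sphere (0:ℂ) R) :
    Tendsto (Pz R φ) (𝓝[ball 0 R] ζ) (𝓝 (φ ζ)) := by
  have hRR : |R| = R := abs_of_pos hR
  obtain ⟨M, hM⟩ := (isCompact_sphere (0:ℂ) R).exists_bound_of_continuousOn hφ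
  have hM0 : 0 ≤ M := (norm_nonneg _).trans (hM ζ hζ)
  have hci : CircleIntegrable φ 0 R := ContinuousOn.circleIntegrable' (by rwa [hRR])
  rw [Metric.tendsto_nhds]
  intro ε hε
  obtain ⟨δ, hδ, hd⟩ := Metric.continuousOn_iff.1 hφ ζ hζ (ε/2) (by linarith)
  let C := 2 * M / δ ^ 2
  have hC : 0 ≤ C := by positivity
  -- pointwise bound
  let A : ℂ → ℂ := fun x => ((2 * (R * R) : ℝ) : ℂ) - 2 * (x * (starRingEnd ℂ) ζ)
  have hA : ∀ x ∈ sphere (0:ℂ) R, (A x).re = ‖x - ζ‖ ^ 2 := by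
    intro x hx
    have h1 : normSq x = R ^ 2 := by rw [Complex.normSq_eq_norm_sq]; simp at hx; rw [hx]
    have h2 : normSq ζ = R ^ 2 := by rw [Complex.normSq_eq_norm_sq]; simp at hζ; rw [hζ]
    rw [← Complex.normSq_eq_norm_sq]
    simp only [A, normSq_apply] at *
    simp
    linear_combination -h1 - h2
  have hAζ : (A ζ).re = 0 := by rw [hA ζ hζ]; simp
  have hAd : Differentiable ℂ A := by fun_prop
  have hpt : ∀ x ∈ sphere (0:ℂ) R, |φ x - φ ζ| ≤ ε/2 + C * (A x).re := by
    intro x hx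
    rw [hA x hx]
    by_cases hxd : dist x ζ < δ
    · have := hd x hx hxd
      rw [Real.dist_eq] at this
      have : 0 ≤ C * ‖x - ζ‖ ^ 2 := by positivity
      linarith
    · push Not at hxd
      rw [dist_eq_norm] at hxd
      have h1 : |φ x - φ ζ| ≤ 2 * M := by
        have a := hM x hx
        have b := hM ζ hζ
        rw [Real.norm_eq_abs] at a b
        exact (abs_sub _ _).trans (by linarith)
      have h2 : 2 * M ≤ C * ‖x - ζ‖ ^ 2 := by
        calc 2 * M = C * δ ^ 2 := by simp only [C]; field_simp
          _ ≤ _ := by gcongr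
      linarith
  let B1 : ℂ → ℂ := fun x => (φ ζ + ε/2 : ℝ) + C * A x
  let B2 : ℂ → ℂ := fun x => (φ ζ - ε/2 : ℝ) - C * A x
  have hB1 : Differentiable ℂ B1 := by fun_prop
  have hB2 : Differentiable ℂ B2 := by fun_prop
  have r1 : ∀ x, (B1 x).re = φ ζ + ε/2 + C * (A x).re := by intro x; simp [B1]
  have r2 : ∀ x, (B2 x).re = φ ζ - ε/2 - C * (A x).re := by intro x; simp [B2]
  have c1 : CircleIntegrable (fun x => (B1 x).re) 0 R :=
    ContinuousOn.circleIntegrable' (Complex.continuous_re.comp hB1.continuous).continuousOn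
  have c2 : CircleIntegrable (fun x => (B2 x).re) 0 R :=
    ContinuousOn.circleIntegrable' (Complex.continuous_re.comp hB2.continuous).continuousOn
  have hev : ∀ᶠ z in 𝓝 ζ, C * (A z).re < ε / 2 := by
    have : ContinuousAt (fun z => C * (A z).re) ζ :=
      (continuous_const.mul (Complex.continuous_re.comp hAd.continuous)).continuousAt
    apply this.eventually_lt continuousAt_const
    simp only [hAζ]; linarith
  filter_upwards [self_mem_nhdsWithin, nhdsWithin_le_nhds hev] with z hz hz2
  have u1 : Pz R φ z ≤ (B1 z).re := by
    rw [← Pz_re hB1 hz]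
    apply Pz_mono hci c1 _ hz
    intro x hx
    rw [hRR] at hx
    have := hpt x hx
    rw [r1]; rw [abs_le] at this; linarith
  have u2 : (B2 z).re ≤ Pz R φ z := by
    rw [← Pz_re hB2 hz]
    apply Pz_mono c2 hci _ hz
    intro x hx
    rw [hRR] at hx
    have := hpt x hx
    rw [r2]; rw [abs_le] at this; linarith
  rw [r1] at u1; rw [r2] at u2
  rw [Real.dist_eq, abs_lt]
  constructor <;> linarith

/-- Poisson extension -/
def Pext (R : ℝ) (φ : ℂ → ℝ) (z : ℂ) : ℝ := by
  classical exact if z ∈ ball (0:ℂ) R then Pz R φ z else φ z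

lemma Pext_ball {R : ℝ} {φ : ℂ → ℝ} {z : ℂ} (h : z ∈ ball (0:ℂ) R) : Pext R φ z = Pz R φ z := by
  rw [Pext, if_pos h]
lemma Pext_nball {R : ℝ} {φ : ℂ → ℝ} {z : ℂ} (h : z ∉ ball (0:ℂ) R) : Pext R φ z = φ z := by
  rw [Pext, if_neg h]

lemma Pext_contOn {R : ℝ} (hR : 0 < R) {φ : ℂ → ℝ} {S : Set ℂ} (hS2 : sphere 0 R ⊆ S)
    (hφ : ContinuousOn φ (S \ ball 0 R)) : ContinuousOn (Pext R φ) S := by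
  have hφs : ContinuousOn φ (sphere 0 R) := hφ.mono (fun x hx => ⟨hS2 hx, by
    simp at hx; simp [hx]⟩)
  have hci : CircleIntegrable φ 0 R := ContinuousOn.circleIntegrable' (by rwa [abs_of_pos hR])
  obtain ⟨G, hG, hG2⟩ := Pz_analytic hci
  intro z hz
  by_cases hzb : z ∈ ball (0:ℂ) R
  · apply ContinuousAt.continuousWithinAt
    have h1 : ContinuousAt (fun z => (G z).re) z :=
      Complex.continuous_re.continuousAt.comp (hG z hzb).continuousAt
    apply h1.congr
    filter_upwards [isOpen_ball.mem_nhds hzb] with y hy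
    rw [Pext_ball hy, hG2 y hy]
  · have hsplit : S ⊆ (S \ ball 0 R) ∪ ball 0 R := by
      intro x hx; by_cases h : x ∈ ball (0:ℂ) R
      · exact Or.inr h
      · exact Or.inl ⟨hx, h⟩
    apply ContinuousWithinAt.mono _ hsplit
    apply ContinuousWithinAt.union
    · exact (hφ z ⟨hz, hzb⟩).congr (fun y hy => Pext_nball hy.2) (Pext_nball hzb)
    · by_cases hzs : z ∈ sphere (0:ℂ) R
      · have := Pz_bdry hR hφs hzs
        rw [ContinuousWithinAt, Pext_nball hzb]
        apply this.congr'
        filter_upwards [self_mem_nhdsWithin] with y hy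
        rw [Pext_ball hy]
      · have : 𝓝[ball (0:ℂ) R] z = ⊥ := by
          rw [← notMem_closure_iff_nhdsWithin_eq_bot, closure_ball _ hR.ne']
          intro h
          simp at h hzb hzs
          exact hzs (le_antisymm h hzb)
        rw [ContinuousWithinAt, this]
        exact tendsto_bot

lemma mean_re {G : ℂ → ℂ} {U : Set ℂ} (hU : IsOpen U) (hG : DifferentiableOn ℂ G U) {z : ℂ}
    (hz : z ∈ U) : ∀ᶠ ρ in 𝓝[>] (0:ℝ), Real.circleAverage (fun x => (G x).re) z ρ = (G z).re := by
  obtain ⟨δ, hδ, hsub⟩ := Metric.isOpen_iff.1 hU z hz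
  filter_upwards [Ioo_mem_nhdsGT hδ] with ρ hρ
  apply InnerProductSpace.HarmonicOnNhd.circleAverage_eq
  intro x hx
  rw [abs_of_pos hρ.1] at hx
  exact AnalyticAt.harmonicAt_re
    (hG.analyticAt (hU.mem_nhds (hsub (closedBall_subset_ball hρ.2 hx))))

lemma circleAverage_congr_ev {w v : ℂ → ℝ} {z : ℂ} (h : w =ᶠ[𝓝 z] v) :
    ∀ᶠ ρ in 𝓝[>] (0:ℝ), Real.circleAverage w z ρ = Real.circleAverage v z ρ := by
  obtain ⟨δ, hδ, hsub⟩ := Metric.eventually_nhds_iff_ball.1 h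
  filter_upwards [Ioo_mem_nhdsGT hδ] with ρ hρ
  apply Real.circleAverage_congr_sphere
  intro x hx
  rw [abs_of_pos hρ.1] at hx
  exact hsub x (by rw [mem_ball, mem_sphere.1 hx]; exact hρ.2)

lemma LS_congr {w v : ℂ → ℝ} {U : Set ℂ} (hU : IsOpen U) (h : ∀ z ∈ U, w z = v z) (hw : LS w U) :
    LS v U := by
  intro z hz
  have : w =ᶠ[𝓝 z] v := by filter_upwards [hU.mem_nhds hz] with y hy using h y hy
  filter_upwards [hw z hz, circleAverage_congr_ev this] with ρ h1 h2
  rw [← h z hz, ← h2]; exact h1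

lemma LS_le_Pz {w : ℂ → ℝ} {R : ℝ} (hR : 0 < R) (hc : ContinuousOn w (closedBall 0 R))
    (hw : LS w (ball 0 R)) {z : ℂ} (hz : z ∈ ball (0:ℂ) R) : w z ≤ Pz R w z := by
  have hcs : ContinuousOn w (closedBall 0 R \ ball 0 R) := hc.mono sdiff_subset
  have hP : ContinuousOn (Pext R w) (closedBall 0 R) :=
    Pext_contOn hR sphere_subset_closedBall hcs
  have hci : CircleIntegrable w 0 R := ContinuousOn.circleIntegrable'
    (by rw [abs_of_pos hR]; exact hc.mono sphere_subset_closedBall)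
  obtain ⟨G, hG, hG2⟩ := Pz_analytic hci
  have hLS : LS (fun x => w x - Pext R w x) (ball 0 R) := by
    intro x hx
    obtain ⟨δ, hδ, hsub⟩ := Metric.isOpen_iff.1 isOpen_ball x hx
    have he : Pext R w =ᶠ[𝓝 x] fun y => (G y).re := by
      filter_upwards [isOpen_ball.mem_nhds hx] with y hy
      rw [Pext_ball hy, hG2 y hy]
    filter_upwards [hw x hx, mean_re isOpen_ball hG.differentiableOn hx, circleAverage_congr_ev he,
      Ioo_mem_nhdsGT hδ] with ρ h1 h2 h3 hρ
    have hs : sphere x |ρ| ⊆ closedBall 0 R := by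
      intro y hy
      rw [abs_of_pos hρ.1] at hy
      exact ball_subset_closedBall (hsub (by rw [mem_ball, mem_sphere.1 hy]; exact hρ.2))
    rw [Real.circleAverage_fun_sub ((hc.mono hs).circleIntegrable')
      ((hP.mono hs).circleIntegrable'), h3, h2, he.self_of_nhds]
    linarith
  have := maxprin hR (hc.sub hP) hLS (fun y hy => by
    rw [Pi.sub_apply, Pext_nball (by simp at hy; simp [hy])]; simp) z (ball_subset_closedBall hz)
  rw [Pi.sub_apply, Pext_ball hz] at this
  linarith

lemma LS_mean0 {w : ℂ → ℝ} {R : ℝ} (hR : 0 < R) (hc : ContinuousOn w (closedBall 0 R))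
    (hw : LS w (ball 0 R)) : w 0 ≤ Real.circleAverage w 0 R := by
  have := LS_le_Pz hR hc hw (mem_ball_self hR)
  rw [Pz] at this
  rwa [Real.circleAverage_congr_sphere (f₂ := w)] at this
  intro x hx
  simp at hx
  have : x ≠ 0 := by rintro rfl; simp at hx; exact (abs_pos.2 hR.ne').ne hx
  simp [poissonKernel_def, this]

lemma LS_mean {w : ℂ → ℝ} {c : ℂ} {R : ℝ} (hR : 0 < R) (hc : ContinuousOn w (closedBall c R))
    (hw : LS w (ball c R)) : w c ≤ Real.circleAverage w c R := by
  have h := LS_mean0 (w := fun x => w (x + c)) hR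
    (hc.comp (by fun_prop) (fun x hx => by simpa using hx)) (by
      intro z hz
      filter_upwards [hw (z + c) (by simpa using hz)] with ρ hρ
      convert hρ using 1
      rw [Real.circleAverage_def, Real.circleAverage_def]
      congr 2; ext t; simp [circleMap]; congr 1; ring)
  rw [Real.circleAverage_map_add_const] at h
  simpa using h

end

section

lemma norm_submean {G : ℂ → ℂ} {U : Set ℂ} (hU : IsOpen U) (hG : DifferentiableOn ℂ G U) :
    LS (fun z => ‖G z‖) U := by
  intro z hz
  obtain ⟨δ, hδ, hsub⟩ := Metric.isOpen_iff.1 hU z hz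
  filter_upwards [Ioo_mem_nhdsGT hδ] with ρ hρ
  have h1 : Real.circleAverage G z ρ = G z := by
    apply InnerProductSpace.HarmonicOnNhd.circleAverage_eq
    intro x hx
    rw [abs_of_pos hρ.1] at hx
    exact AnalyticAt.harmonicAt
      (hG.analyticAt (hU.mem_nhds (hsub (closedBall_subset_ball hρ.2 hx))))
  rw [← h1, Real.circleAverage_def, Real.circleAverage_def, norm_smul, smul_eq_mul,
    Real.norm_of_nonneg (by positivity)]
  gcongr
  exact intervalIntegral.norm_integral_le_integral_norm (by positivity)

lemma pow_LS {f : ℂ → ℂ} {U : Set ℂ} (hU : IsOpen U) (hf : DifferentiableOn ℂ f U) {q : ℝ}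
    (hq : 0 < q) : LS (fun z => ‖f z‖ ^ q) U := by
  intro z hz
  by_cases h0 : f z = 0
  · filter_upwards with ρ
    rw [h0, norm_zero, Real.zero_rpow hq.ne']
    exact Real.circleAverage_nonneg_of_nonneg (fun x _ => by positivity)
  · have han : AnalyticAt ℂ f z := hf.analyticAt (hU.mem_nhds hz)
    let g : ℂ → ℂ := fun x => Complex.exp (q * Complex.log (f x / f z))
    have hg : AnalyticAt ℂ g z := by
      have : AnalyticAt ℂ (fun x => Complex.log (f x / f z)) z := by
        apply AnalyticAt.clog (han.div_const)
        rw [div_self h0]; simp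
      exact (analyticAt_const.mul this).cexp
    obtain ⟨V, hVn, hV⟩ := hg.eventually_analyticAt.exists_mem
    obtain ⟨V', hV'V, hV'o, hzV'⟩ := _root_.mem_nhds_iff.1 hVn
    have hLS := norm_submean hV'o (fun x hx => (hV x (hV'V hx)).differentiableAt.differentiableWithinAt)
      z hzV'
    have hne : ∀ᶠ x in 𝓝 z, f x ≠ 0 := han.continuousAt.eventually_ne h0
    have he : (fun x => ‖f x‖ ^ q) =ᶠ[𝓝 z] fun x => (‖f z‖ ^ q) • ‖g x‖ := by
      filter_upwards [hne] with x hx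
      simp only [g, Complex.norm_exp, Complex.re_ofReal_mul, Complex.log_re, norm_div, smul_eq_mul]
      rw [mul_comm q, ← Real.rpow_def_of_pos (by positivity), ← Real.mul_rpow (by positivity) (by positivity)]
      congr 1
      have : ‖f z‖ ≠ 0 := by simpa using h0
      field_simp
    filter_upwards [hLS, circleAverage_congr_ev he] with ρ h1 h2
    have e3 : ‖f z‖ ^ q = ‖f z‖ ^ q * ‖g z‖ := he.self_of_nhds
    rw [h2, Real.circleAverage_fun_smul]
    simp only [smul_eq_mul]
    refine e3.le.trans ?_
    gcongr

lemma taylor2 {g : ℂ → ℝ} (hg : ContDiff ℝ 2 g) (z : ℂ) {ε : ℝ} (hε : 0 < ε) :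
    ∃ δ > 0, ∀ h : ℂ, ‖h‖ < δ →
      |g (z + h) - g z - fderiv ℝ g z h - (1/2) * fderiv ℝ (fderiv ℝ g) z h h| ≤ ε * ‖h‖ ^ 2 := by
  have hD : ContDiff ℝ 1 (fderiv ℝ g) := hg.fderiv_right (by norm_num)
  have hd : HasFDerivAt (fderiv ℝ g) (fderiv ℝ (fderiv ℝ g) z) z :=
    (hD.differentiable (by norm_num) z).hasFDerivAt
  set D := fderiv ℝ g with hDdef
  set D2 := fderiv ℝ D z
  have := hd.isLittleO
  rw [Asymptotics.isLittleO_iff] at this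
  obtain ⟨δ, hδ, h⟩ := Metric.eventually_nhds_iff.1 (this hε)
  refine ⟨δ, hδ, fun v hv => ?_⟩
  let k : ℝ → ℝ := fun t => g (z + t • v) - t * D z v - t ^ 2 / 2 * D2 v v
  have hk : ∀ t : ℝ, HasDerivAt k (D (z + t • v) v - D z v - t * D2 v v) t := by
    intro t
    have h1 : HasDerivAt (fun t : ℝ => g (z + t • v)) (D (z + t • v) v) t := by
      have a : HasFDerivAt g (D (z + t • v)) (z + t • v) :=
        (hg.differentiable (by norm_num) _).hasFDerivAt
      have b : HasDerivAt (fun t : ℝ => z + t • v) v t := by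
        simpa using ((hasDerivAt_id t).smul_const v).const_add z
      exact a.comp_hasDerivAt t b
    have h2 : HasDerivAt (fun t : ℝ => t * D z v) (D z v) t := by
      simpa using (hasDerivAt_id t).mul_const (D z v)
    have h3 : HasDerivAt (fun t : ℝ => t ^ 2 / 2 * D2 v v) (t * D2 v v) t := by
      have := (((hasDerivAt_id t).pow 2).div_const 2).mul_const (D2 v v)
      refine this.congr_deriv ?_
      simp
    exact (h1.sub h2).sub h3
  have := norm_image_sub_le_of_norm_deriv_le_segment_01' (f := k)
    (fun x _ => (hk x).hasDerivWithinAt) (C := ε * ‖v‖ ^ 2) (by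
      intro t ht
      have hb : dist (z + t • v) z < δ := by
        rw [dist_eq_norm, add_sub_cancel_left, norm_smul, Real.norm_of_nonneg ht.1]
        have := norm_nonneg v
        nlinarith [ht.2, ht.1]
      have e1 := h hb
      rw [add_sub_cancel_left] at e1
      have e2 : D (z + t • v) v - D z v - t * D2 v v = (D (z + t • v) - D z - D2 (t • v)) v := by
        rw [map_smul]
        rfl
      rw [e2]
      refine (ContinuousLinearMap.le_opNorm _ _).trans ?_
      calc _ ≤ (ε * ‖t • v‖) * ‖v‖ := by gcongr
        _ = ε * ‖v‖ ^ 2 * t := by rw [norm_smul, Real.norm_of_nonneg ht.1]; ring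
        _ ≤ ε * ‖v‖ ^ 2 * 1 := by gcongr; exact ht.2.le
        _ = _ := by ring)
  simp only [k, Real.norm_eq_abs] at this
  convert this using 2
  simp
  ring

lemma lap_eq {g : ℂ → ℝ} (hg : ContDiff ℝ 2 g) (z : ℂ) :
    lap g z = fderiv ℝ (fderiv ℝ g) z 1 1 + fderiv ℝ (fderiv ℝ g) z I I := by
  have hD : ContDiff ℝ 1 (fderiv ℝ g) := hg.fderiv_right (by norm_num)
  have h : ∀ v : ℂ, fderiv ℝ (fun w => fderiv ℝ g w v) z = (fderiv ℝ (fderiv ℝ g) z).flip v := by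
    intro v
    have := (hD.differentiable (by norm_num) z).hasFDerivAt.clm_apply (hasFDerivAt_const v z)
    rw [this.fderiv]; ext; simp
  rw [lap, h, h]; simp

lemma lap_nonneg {g : ℂ → ℝ} (hg : ContDiff ℝ 2 g) {z : ℂ}
    (h : ∀ᶠ ρ in 𝓝[>] (0:ℝ), g z ≤ Real.circleAverage g z ρ) : 0 ≤ lap g z := by
  by_contra hneg
  push Not at hneg
  obtain ⟨δ, hδ, hT⟩ := taylor2 hg z (ε := - lap g z / 8) (by linarith)
  obtain ⟨ρ, h1, hρ⟩ := (h.and (Ioo_mem_nhdsGT hδ)).exists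
  have hρ0 := hρ.1
  set D := fderiv ℝ g z
  set D2 := fderiv ℝ (fderiv ℝ g) z
  rw [lap_eq hg] at hneg hT
  set a := D2 1 1
  set b := D2 I I
  have hpt : ∀ t : ℝ, g (circleMap z ρ t) ≤ (g z - (a+b)/8 * ρ^2 + ρ * (D 1 * Real.cos t + D I * Real.sin t)) +
      ρ^2/2 * (a * (Real.cos t)^2 + (D2 1 I + D2 I 1) * (Real.sin t * Real.cos t) + b * (Real.sin t)^2) := by
    intro t
    let v : ℂ := ρ * Complex.exp (t * I)
    have hv : ‖v‖ = ρ := by simp [v, Complex.norm_exp_ofReal_mul_I, abs_of_pos hρ0]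
    have hv2 : v = (ρ * Real.cos t) • (1:ℂ) + (ρ * Real.sin t) • I := by
      simp only [v, Complex.exp_mul_I]
      simp
      ring
    have e := hT v (by rw [hv]; exact hρ.2)
    have e1 : D v = ρ * (D 1 * Real.cos t + D I * Real.sin t) := by
      rw [hv2, map_add, map_smul, map_smul, smul_eq_mul, smul_eq_mul]; ring
    have e2 : D2 v v = ρ^2 * (a * (Real.cos t)^2 + (D2 1 I + D2 I 1) * (Real.sin t * Real.cos t) + b * (Real.sin t)^2) := by
      rw [hv2]
      simp only [map_add, map_smul, smul_eq_mul, ContinuousLinearMap.add_apply,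
        ContinuousLinearMap.smul_apply, a, b]
      ring
    rw [hv, e1, e2] at e
    have e3 : circleMap z ρ t = z + v := rfl
    rw [e3]
    have := (abs_le.1 e).2
    linarith
  have hint : Real.circleAverage g z ρ ≤ (2 * π)⁻¹ * ∫ t in (0:ℝ)..2*π,
      ((g z - (a+b)/8 * ρ^2 + ρ * (D 1 * Real.cos t + D I * Real.sin t)) +
      ρ^2/2 * (a * (Real.cos t)^2 + (D2 1 I + D2 I 1) * (Real.sin t * Real.cos t) + b * (Real.sin t)^2)) := by
    rw [Real.circleAverage_def, smul_eq_mul]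
    gcongr
    apply intervalIntegral.integral_mono_on (by positivity)
    · exact (hg.continuous.comp (continuous_circleMap z ρ)).intervalIntegrable _ _
    · exact Continuous.intervalIntegrable (by fun_prop) _ _
    · intro t _; exact hpt t
  have hval : ∫ t in (0:ℝ)..2*π,
      ((g z - (a+b)/8 * ρ^2 + ρ * (D 1 * Real.cos t + D I * Real.sin t)) +
      ρ^2/2 * (a * (Real.cos t)^2 + (D2 1 I + D2 I 1) * (Real.sin t * Real.cos t) + b * (Real.sin t)^2)) =
      2 * π * (g z + (a + b)/8 * ρ^2) := by
    rw [intervalIntegral.integral_add (Continuous.intervalIntegrable (by fun_prop) _ _)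
      (Continuous.intervalIntegrable (by fun_prop) _ _),
      intervalIntegral.integral_add (Continuous.intervalIntegrable (by fun_prop) _ _)
      (Continuous.intervalIntegrable (by fun_prop) _ _),
      intervalIntegral.integral_const_mul, intervalIntegral.integral_const_mul,
      intervalIntegral.integral_add (Continuous.intervalIntegrable (by fun_prop) _ _)
      (Continuous.intervalIntegrable (by fun_prop) _ _),
      intervalIntegral.integral_add (Continuous.intervalIntegrable (by fun_prop) _ _)
      (Continuous.intervalIntegrable (by fun_prop) _ _),
      intervalIntegral.integral_add (Continuous.intervalIntegrable (by fun_prop) _ _)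
      (Continuous.intervalIntegrable (by fun_prop) _ _)]
    simp only [intervalIntegral.integral_const_mul, integral_cos_sq, integral_sin_sq,
      integral_sin, integral_cos, integral_sin_mul_cos₁, intervalIntegral.integral_const, smul_eq_mul]
    simp
    ring
  rw [hval] at hint
  have hp : (2 * π)⁻¹ * (2 * π * (g z + (a + b)/8 * ρ^2)) = g z + (a + b)/8 * ρ^2 := by
    field_simp
  rw [hp] at hint
  have : (a + b)/8 * ρ^2 < 0 := by
    apply mul_neg_of_neg_of_pos <;> [linarith; positivity]
  linarith

/-- mollification -/
def mol (V k : ℂ → ℝ) : ℂ → ℝ := convolution V k (ContinuousLinearMap.mul ℝ ℝ) volume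

lemma mol_apply (V k : ℂ → ℝ) (z : ℂ) : mol V k z = ∫ t, V t * k (z - t) := rfl

lemma mol_apply' (V k : ℂ → ℝ) (z : ℂ) : mol V k z = ∫ t, V (z - t) * k t := by
  rw [mol, convolution_eq_swap]; rfl

lemma mol_contDiff {V k : ℂ → ℝ} (hV : Continuous V) (hk : ContDiff ℝ 2 k)
    (hks : HasCompactSupport k) : ContDiff ℝ 2 (mol V k) :=
  hks.contDiff_convolution_right _ hV.locallyIntegrable hk

lemma mol_fderiv {V k : ℂ → ℝ} (hV : Continuous V) (hk : ContDiff ℝ 1 k)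
    (hks : HasCompactSupport k) (z v : ℂ) :
    fderiv ℝ (mol V k) z v = mol V (fun x => fderiv ℝ k x v) z := by
  have := hks.hasFDerivAt_convolution_right (ContinuousLinearMap.mul ℝ ℝ) (μ := volume)
    hV.locallyIntegrable hk z
  rw [mol, this.fderiv, convolution_precompR_apply _ hV.locallyIntegrable (hks.fderiv ℝ)
    (hk.continuous_fderiv one_ne_zero)]
  rfl

lemma mol_fderiv2 {V k : ℂ → ℝ} (hV : Continuous V) (hk : ContDiff ℝ 2 k)
    (hks : HasCompactSupport k) (z v : ℂ) :
    fderiv ℝ (fun w => fderiv ℝ (mol V k) w v) z v =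
      mol V (fun x => fderiv ℝ (fun w => fderiv ℝ k w v) x v) z := by
  have hD : ContDiff ℝ 1 (fun w => fderiv ℝ k w v) :=
    (hk.fderiv_right (m := 1) (by norm_num)).clm_apply contDiff_const
  have hc : HasCompactSupport (fun w => fderiv ℝ k w v) :=
    (hks.fderiv ℝ).comp_left (g := fun L : ℂ →L[ℝ] ℝ => L v) (by simp)
  have : (fun w => fderiv ℝ (mol V k) w v) = mol V (fun w => fderiv ℝ k w v) := by
    ext w; exact mol_fderiv hV (hk.of_le (by norm_num)) hks w v
  rw [this, mol_fderiv hV hD hc]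

lemma lap_cont {k : ℂ → ℝ} (hk : ContDiff ℝ 2 k) : Continuous (lap k) := by
  have hD : ∀ v, ContDiff ℝ 1 (fun w => fderiv ℝ k w v) := fun v =>
    (hk.fderiv_right (m := 1) (by norm_num)).clm_apply contDiff_const
  have : ∀ v : ℂ, Continuous (fun x => fderiv ℝ (fun w => fderiv ℝ k w v) x v) := fun v =>
    ((hD v).continuous_fderiv one_ne_zero).clm_apply continuous_const
  exact (this 1).add (this I)

lemma lap_mol {V k : ℂ → ℝ} (hV : Continuous V) (hk : ContDiff ℝ 2 k)
    (hks : HasCompactSupport k) (z : ℂ) :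
    lap (mol V k) z = ∫ t, V t * lap k (z - t) := by
  have hD : ∀ v, ContDiff ℝ 1 (fun w => fderiv ℝ k w v) := fun v =>
    (hk.fderiv_right (m := 1) (by norm_num)).clm_apply contDiff_const
  have hc : ∀ v, HasCompactSupport (fun w => fderiv ℝ k w v) := fun v =>
    (hks.fderiv ℝ).comp_left (g := fun L : ℂ →L[ℝ] ℝ => L v) (by simp)
  have hD2 : ∀ v : ℂ, Continuous (fun x => fderiv ℝ (fun w => fderiv ℝ k w v) x v) := fun v =>
    ((hD v).continuous_fderiv one_ne_zero).clm_apply continuous_const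
  have hc2 : ∀ v : ℂ, HasCompactSupport (fun x => fderiv ℝ (fun w => fderiv ℝ k w v) x v) := fun v =>
    ((hc v).fderiv ℝ).comp_left (g := fun L : ℂ →L[ℝ] ℝ => L v) (by simp)
  have hi : ∀ v : ℂ, Integrable (fun t => V t * fderiv ℝ (fun w => fderiv ℝ k w v) (z - t) v) := by
    intro v
    exact (hc2 v).convolutionExists_right (ContinuousLinearMap.mul ℝ ℝ) hV.locallyIntegrable (hD2 v) z
  rw [lap, mol_fderiv2 hV hk hks, mol_fderiv2 hV hk hks, mol_apply, mol_apply,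
    ← integral_add (hi 1) (hi I)]
  congr 1; ext t; rw [lap]; ring

lemma mol_submean {V k : ℂ → ℝ} (hV : Continuous V) (hk : Continuous k)
    (hks : HasCompactSupport k) (hk0 : ∀ x, 0 ≤ k x) {z : ℂ} {ρ : ℝ}
    (h : ∀ t, k t ≠ 0 → V (z - t) ≤ Real.circleAverage V (z - t) ρ) :
    mol V k z ≤ Real.circleAverage (mol V k) z ρ := by
  have hcm : ∀ t θ, circleMap (z - t) ρ θ = circleMap z ρ θ - t := by
    intro t θ; simp [circleMap]; ring
  have hint : ∀ x : ℂ → ℂ, Continuous x → Integrable (fun t => V (x t) * k t) := by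
    intro x hx
    apply Continuous.integrable_of_hasCompactSupport (by fun_prop)
    exact hks.mul_left
  have hF : Continuous (fun q : ℝ × ℂ => V (circleMap z ρ q.1 - q.2) * k q.2) := by fun_prop
  have swap : Real.circleAverage (mol V k) z ρ =
      ∫ t, Real.circleAverage V (z - t) ρ * k t := by
    rw [Real.circleAverage_def]
    simp_rw [mol_apply']
    rw [intervalIntegral.integral_of_le (by positivity), integral_integral_swap]
    · rw [← integral_smul]
      congr 1; ext t
      rw [Real.circleAverage_def, ← intervalIntegral.integral_of_le (by positivity),
        intervalIntegral.integral_mul_const]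
      simp_rw [hcm]
      simp; ring
    · have : IntegrableOn (fun q : ℝ × ℂ => V (circleMap z ρ q.1 - q.2) * k q.2)
          (Icc 0 (2*π) ×ˢ tsupport k) (volume.prod volume) :=
        hF.continuousOn.integrableOn_compact (isCompact_Icc.prod hks)
      have h2 : IntegrableOn (fun q : ℝ × ℂ => V (circleMap z ρ q.1 - q.2) * k q.2)
          (Ioc 0 (2*π) ×ˢ univ) (volume.prod volume) := by
        have h3 := this.mono_set (prod_mono_left (t := tsupport k) Ioc_subset_Icc_self)
        refine IntegrableOn.of_forall_sdiff_eq_zero h3 (measurableSet_Ioc.prod MeasurableSet.univ) ?_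
        rintro ⟨a, b⟩ hab
        have : b ∉ tsupport k := fun hb => hab.2 ⟨hab.1.1, hb⟩
        simp [image_eq_zero_of_notMem_tsupport this]
      rw [IntegrableOn, ← Measure.prod_restrict, Measure.restrict_univ] at h2
      exact h2
  rw [swap, mol_apply']
  apply integral_mono (hint _ (by fun_prop))
  · apply Continuous.integrable_of_hasCompactSupport _ hks.mul_left
    apply Continuous.mul _ hk
    simp_rw [Real.circleAverage_def, smul_eq_mul]
    apply Continuous.mul continuous_const
    apply intervalIntegral.continuous_parametric_intervalIntegral_of_continuous'
    simp only [circleMap, Function.uncurry_def]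
    fun_prop
  · intro t
    by_cases ht : k t = 0
    · simp [ht]
    · exact mul_le_mul_of_nonneg_right (h t ht) (hk0 t)

end

section

lemma deriv_ne_of_inj {f : ℂ → ℂ} {z₀ : ℂ} {U : Set ℂ} (hU : U ∈ 𝓝 z₀) (hf : AnalyticAt ℂ f z₀)
    (hi : InjOn f U) : deriv f z₀ ≠ 0 := by
  have hF : AnalyticAt ℂ (fun z => f z - f z₀) z₀ := hf.sub analyticAt_const
  have hnz : ¬ ∀ᶠ z in 𝓝 z₀, f z - f z₀ = 0 := by
    intro h
    have h2 : ∀ᶠ z in 𝓝[≠] z₀, z = z₀ := by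
      filter_upwards [h.filter_mono nhdsWithin_le_nhds, nhdsWithin_le_nhds hU] with z hz hzU
      exact hi hzU (mem_of_mem_nhds hU) (sub_eq_zero.1 hz)
    obtain ⟨z, hz1, hz2⟩ := (h2.and self_mem_nhdsWithin).exists
    exact hz2 hz1
  obtain ⟨n, g, hg, hg0, he⟩ := (hF.exists_eventuallyEq_pow_smul_nonzero_iff).2 hnz
  simp only [smul_eq_mul] at he
  have hn0 : n ≠ 0 := by
    rintro rfl
    have := he.self_of_nhds
    simp at this
    exact hg0 this.symm
  by_cases hn1 : n = 1
  · subst hn1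
    have hd : HasDerivAt (fun z => (z - z₀) ^ 1 * g z) (g z₀) z₀ := by
      have := (((hasDerivAt_id z₀).sub_const z₀).pow 1).mul hg.differentiableAt.hasDerivAt
      refine this.congr_deriv ?_
      simp
    have hd2 : HasDerivAt (fun z => f z - f z₀) (g z₀) z₀ := hd.congr_of_eventuallyEq he
    have hd3 := hd2.add_const (f z₀)
    simp only [sub_add_cancel] at hd3
    rw [hd3.deriv]; exact hg0
  exfalso
  have hn2 : 1 < n := by omega
  obtain ⟨c, hc⟩ := IsAlgClosed.exists_pow_nat_eq (g z₀) (Nat.pos_of_ne_zero hn0)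
  have hc0 : c ≠ 0 := by rintro rfl; exact hg0 (by rw [← hc]; simp [hn0])
  let k : ℂ → ℂ := fun z => c * Complex.exp (Complex.log (g z / g z₀) / n)
  have hk : AnalyticAt ℂ k z₀ := by
    apply analyticAt_const.mul
    apply AnalyticAt.cexp
    apply AnalyticAt.div _ analyticAt_const (by exact_mod_cast hn0)
    apply AnalyticAt.clog (hg.div analyticAt_const hg0)
    simp [div_self hg0]
  have hkn : ∀ᶠ z in 𝓝 z₀, k z ^ n = g z := by
    filter_upwards [hg.continuousAt.eventually_ne hg0] with z hz
    simp only [k]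
    rw [mul_pow, hc, ← Complex.exp_nat_mul, mul_div_cancel₀ _ (by exact_mod_cast hn0),
      Complex.exp_log (div_ne_zero hz hg0)]
    field_simp
  have hk0 : k z₀ ≠ 0 := mul_ne_zero hc0 (Complex.exp_ne_zero _)
  let h : ℂ → ℂ := fun z => (z - z₀) * k z
  have hh : AnalyticAt ℂ h z₀ := (analyticAt_id.sub analyticAt_const).mul hk
  have hhd : HasDerivAt h (k z₀) z₀ := by
    have := ((hasDerivAt_id z₀).sub_const z₀).mul hk.differentiableAt.hasDerivAt
    refine this.congr_deriv ?_
    simp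
  have hst : HasStrictDerivAt h (k z₀) z₀ := by
    rw [← hhd.deriv]; exact hh.hasStrictDerivAt
  have hmap := hst.map_nhds_eq hk0
  have hh0 : h z₀ = 0 := by simp [h]
  rw [hh0] at hmap
  let W : Set ℂ := {z | z ∈ U ∧ f z - f z₀ = (z - z₀) ^ n * g z ∧ k z ^ n = g z}
  have hW : W ∈ 𝓝 z₀ := by filter_upwards [hU, he, hkn] with z a b c using ⟨a, b, c⟩
  have hWi : h '' W ∈ 𝓝 (0:ℂ) := by rw [← hmap]; exact image_mem_map hW
  have hω := Complex.isPrimitiveRoot_exp n hn0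
  set ω := Complex.exp (2 * π * I / n)
  have hWi2 : (fun z => ω * z) ⁻¹' (h '' W) ∈ 𝓝 (0:ℂ) := by
    apply (continuous_const.mul continuous_id).continuousAt.preimage_mem_nhds
    simpa using hWi
  have : ∀ᶠ x in 𝓝[≠] (0:ℂ), x ∈ h '' W ∧ ω * x ∈ h '' W :=
    nhdsWithin_le_nhds (inter_mem hWi hWi2)
  obtain ⟨x, ⟨⟨a, ha, hax⟩, ⟨b, hb, hbx⟩⟩, hx0⟩ := (this.and self_mem_nhdsWithin).exists
  have hval : ∀ y ∈ W, f y - f z₀ = h y ^ n := by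
    intro y hy
    show _ = ((y - z₀) * k y) ^ n
    rw [mul_pow, hy.2.2]; exact hy.2.1
  have hab : f a = f b := by
    have h1 := hval a ha
    have h2 := hval b hb
    rw [hbx, mul_pow, hω.pow_eq_one, one_mul, ← hax, ← h1] at h2
    linear_combination -h2
  have := hi ha.1 hb.1 hab
  rw [← this, hax] at hbx
  have hω1 := hω.ne_one hn2
  apply hω1
  have hx0' : x ≠ 0 := hx0
  field_simp at hbx
  exact hbx.symm

/-- the conformal set-up -/
structure CM (Ω U : Set ℂ) (ψ : ℂ → ℂ) : Prop where
  oU : IsOpen U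
  sub : closedBall (0:ℂ) 1 ⊆ U
  dif : DifferentiableOn ℂ ψ U
  inj : InjOn ψ U
  im : ψ '' ball (0:ℂ) 1 = Ω
  fr : ψ '' sphere (0:ℂ) 1 = frontier Ω

lemma CM.upper {Ω U ψ} (h : CM Ω U ψ) : ∃ L > 0, ∀ a ∈ closedBall (0:ℂ) 1, ∀ b ∈ closedBall (0:ℂ) 1,
    dist (ψ a) (ψ b) ≤ L * dist a b := by
  have hd : ContinuousOn (deriv ψ) (closedBall (0:ℂ) 1) :=
    (h.dif.deriv h.oU).continuousOn.mono h.sub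
  obtain ⟨L, hL⟩ := (isCompact_closedBall (0:ℂ) 1).exists_bound_of_continuousOn hd
  have hL0 : 0 ≤ L := (norm_nonneg _).trans (hL 0 (by simp))
  refine ⟨L + 1, by linarith, fun a ha b hb => ?_⟩
  have := (convex_closedBall (0:ℂ) 1).norm_image_sub_le_of_norm_deriv_le
    (fun x hx => h.dif.differentiableAt (h.oU.mem_nhds (h.sub hx))) hL hb ha
  rw [dist_eq_norm, dist_eq_norm]
  refine this.trans ?_
  gcongr; linarith

lemma CM.lower {Ω U ψ} (h : CM Ω U ψ) : ∃ c > 0, ∀ a ∈ closedBall (0:ℂ) 1, ∀ b ∈ closedBall (0:ℂ) 1,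
    c * dist a b ≤ dist (ψ a) (ψ b) := by
  by_contra hcon
  push Not at hcon
  have := fun n : ℕ => hcon (1 / (n + 1 : ℝ)) (by positivity)
  choose a ha b hb hab using this
  have hK := (isCompact_closedBall (0:ℂ) 1).prod (isCompact_closedBall (0:ℂ) 1)
  obtain ⟨⟨x, y⟩, hxy, φ, hφ, hlim⟩ := hK.tendsto_subseq (x := fun n => (a n, b n))
    (fun n => ⟨ha n, hb n⟩)
  have hla : Tendsto (fun n => a (φ n)) atTop (𝓝 x) := (continuous_fst.tendsto _).comp hlim
  have hlb : Tendsto (fun n => b (φ n)) atTop (𝓝 y) := (continuous_snd.tendsto _).comp hlim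
  have hcψ : ∀ x ∈ closedBall (0:ℂ) 1, ContinuousAt ψ x := fun x hx =>
    (h.dif.differentiableAt (h.oU.mem_nhds (h.sub hx))).continuousAt
  have hlim1 : Tendsto (fun n => 1 / ((φ n : ℝ) + 1)) atTop (𝓝 0) :=
    tendsto_one_div_add_atTop_nhds_zero_nat.comp hφ.tendsto_atTop
  by_cases hxy' : x = y
  · subst hxy'
    have han : AnalyticAt ℂ ψ x := h.dif.analyticAt (h.oU.mem_nhds (h.sub hxy.1))
    have hd0 := deriv_ne_of_inj (h.oU.mem_nhds (h.sub hxy.1)) han h.inj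
    have hst := han.hasStrictDerivAt.hasStrictFDerivAt.isLittleO
    have hd0' : 0 < ‖deriv ψ x‖ := by simpa using hd0
    have hev := hst.def (half_pos hd0')
    have hev2 := hlim.eventually hev
    have hev3 := hlim1.eventually (gt_mem_nhds (half_pos hd0'))
    obtain ⟨n, h1, h2⟩ := (hev2.and hev3).exists
    have h3 := hab (φ n)
    simp only [ContinuousLinearMap.toSpanSingleton_apply, smul_eq_mul, Function.comp] at h1
    have h4 : ‖(a (φ n) - b (φ n)) * deriv ψ x‖ ≤ ‖ψ (a (φ n)) - ψ (b (φ n))‖ +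
        ‖ψ (a (φ n)) - ψ (b (φ n)) - (a (φ n) - b (φ n)) * deriv ψ x‖ := by
      rw [← norm_neg (ψ (a (φ n)) - ψ (b (φ n)) - _)]
      refine le_trans (le_of_eq ?_) (norm_add_le _ _)
      congr 1; ring
    rw [norm_mul] at h4
    rw [dist_eq_norm, dist_eq_norm] at h3
    have h5 : 0 ≤ ‖a (φ n) - b (φ n)‖ := norm_nonneg _
    have h6 : 1 / ((φ n : ℝ) + 1) * ‖a (φ n) - b (φ n)‖ ≤ ‖deriv ψ x‖ / 2 * ‖a (φ n) - b (φ n)‖ := by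
      gcongr
    have h7 := h3.trans_le h6
    nlinarith [h1, h4, h7]
  · have hne : ψ x ≠ ψ y := fun he => hxy' (h.inj (h.sub hxy.1) (h.sub hxy.2) he)
    have l1 : Tendsto (fun n => dist (ψ (a (φ n))) (ψ (b (φ n)))) atTop (𝓝 (dist (ψ x) (ψ y))) :=
      ((hcψ x hxy.1).tendsto.comp hla).dist ((hcψ y hxy.2).tendsto.comp hlb)
    have l2 := hlim1.mul (hla.dist hlb)
    have := le_of_tendsto_of_tendsto l1 l2 (Eventually.of_forall fun n => (hab (φ n)).le)
    rw [zero_mul] at this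
    exact hne (dist_le_zero.1 this)

def tau (ψ : ℂ → ℂ) : ℂ → ℂ := Function.invFunOn ψ (closedBall 0 1)

variable {Ω U : Set ℂ} {ψ : ℂ → ℂ}

lemma CM.tau_psi (h : CM Ω U ψ) {a : ℂ} (ha : a ∈ closedBall (0:ℂ) 1) : tau ψ (ψ a) = a :=
  (h.inj.mono h.sub).leftInvOn_invFunOn ha

lemma CM.isOpen (h : CM Ω U ψ) : IsOpen Ω := by
  rw [← h.im, isOpen_iff_mem_nhds]
  rintro _ ⟨a, ha, rfl⟩
  have haU := h.sub (ball_subset_closedBall ha)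
  have han : AnalyticAt ℂ ψ a := h.dif.analyticAt (h.oU.mem_nhds haU)
  rw [← han.hasStrictDerivAt.map_nhds_eq (deriv_ne_of_inj (h.oU.mem_nhds haU) han h.inj)]
  exact image_mem_map (isOpen_ball.mem_nhds ha)

lemma CM.closure_eq (h : CM Ω U ψ) : closure Ω = ψ '' closedBall 0 1 := by
  rw [closure_eq_interior_union_frontier, h.isOpen.interior_eq, ← h.fr, ← ball_union_sphere,
    image_union, h.im]

lemma CM.psi_tau (h : CM Ω U ψ) {z : ℂ} (hz : z ∈ closure Ω) : ψ (tau ψ z) = z :=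
  Function.invFunOn_eq (by rw [h.closure_eq] at hz; exact hz)

lemma CM.tau_mem (h : CM Ω U ψ) {z : ℂ} (hz : z ∈ closure Ω) : tau ψ z ∈ closedBall (0:ℂ) 1 :=
  Function.invFunOn_mem (by rw [h.closure_eq] at hz; exact hz)

lemma CM.tau_ball (h : CM Ω U ψ) {z : ℂ} (hz : z ∈ Ω) : tau ψ z ∈ ball (0:ℂ) 1 := by
  rw [← h.im] at hz
  obtain ⟨a, ha, rfl⟩ := hz
  rw [h.tau_psi (ball_subset_closedBall ha)]; exact ha

lemma CM.psi_ball (h : CM Ω U ψ) {a : ℂ} (ha : a ∈ ball (0:ℂ) 1) : ψ a ∈ Ω := by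
  rw [← h.im]; exact mem_image_of_mem _ ha

lemma CM.psi_sphere (h : CM Ω U ψ) {a : ℂ} (ha : a ∈ sphere (0:ℂ) 1) : ψ a ∈ frontier Ω := by
  rw [← h.fr]; exact mem_image_of_mem _ ha

lemma CM.tau_sphere (h : CM Ω U ψ) {z : ℂ} (hz : z ∈ frontier Ω) : tau ψ z ∈ sphere (0:ℂ) 1 := by
  rw [← h.fr] at hz
  obtain ⟨a, ha, rfl⟩ := hz
  rw [h.tau_psi (sphere_subset_closedBall ha)]; exact ha

lemma CM.tau_cont (h : CM Ω U ψ) : ContinuousOn (tau ψ) (closure Ω) := by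
  obtain ⟨c, hc, hl⟩ := h.lower
  have : LipschitzOnWith (Real.toNNReal c⁻¹) (tau ψ) (closure Ω) := by
    apply LipschitzOnWith.of_dist_le_mul
    intro x hx y hy
    have := hl _ (h.tau_mem hx) _ (h.tau_mem hy)
    rw [h.psi_tau hx, h.psi_tau hy] at this
    rw [Real.coe_toNNReal _ (by positivity), inv_mul_eq_div, le_div_iff₀ hc]
    linarith
  exact this.continuousOn

lemma CM.psi_contOn (h : CM Ω U ψ) : ContinuousOn ψ (closedBall 0 1) :=
  h.dif.continuousOn.mono h.sub

lemma CM.tau_diff (h : CM Ω U ψ) : DifferentiableOn ℂ (tau ψ) Ω := by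
  intro z hz
  apply DifferentiableAt.differentiableWithinAt
  have haU := h.sub (ball_subset_closedBall (h.tau_ball hz))
  have han : AnalyticAt ℂ ψ (tau ψ z) := h.dif.analyticAt (h.oU.mem_nhds haU)
  have hd := deriv_ne_of_inj (h.oU.mem_nhds haU) han h.inj
  have hcz : ContinuousAt (tau ψ) z :=
    (h.tau_cont.mono subset_closure).continuousAt (h.isOpen.mem_nhds hz)
  refine (HasDerivAt.of_local_left_inverse hcz han.differentiableAt.hasDerivAt hd ?_).differentiableAt
  filter_upwards [h.isOpen.mem_nhds hz] with y hy using h.psi_tau (subset_closure hy)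

lemma CM.radial (h : CM Ω U ψ) {f : ℂ → ℂ} {ζ L : ℂ} (hζ : ζ ∈ sphere (0:ℂ) 1)
    (hN : NTLim Ω f (ψ ζ) L) : Tendsto (fun s : ℝ => f (ψ (s * ζ))) (𝓝[<] 1) (𝓝 L) := by
  obtain ⟨c, hc, hl⟩ := h.lower
  obtain ⟨M, hM, hu⟩ := h.upper
  have hζ1 : ‖ζ‖ = 1 := by simpa using hζ
  refine (hN (M / c + 2) (by have := div_pos hM hc; linarith)).comp ?_
  have hin : ∀ s : ℝ, s ∈ Ioo (0:ℝ) 1 → (s * ζ : ℂ) ∈ ball (0:ℂ) 1 := by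
    intro s hs
    simp [hζ1, abs_of_pos hs.1, hs.2]
  rw [tendsto_nhdsWithin_iff]
  constructor
  · have h1 : ContinuousAt ψ ζ := (h.dif.differentiableAt
      (h.oU.mem_nhds (h.sub (sphere_subset_closedBall hζ)))).continuousAt
    have h2 : Tendsto (fun s : ℝ => (s * ζ : ℂ)) (𝓝[<] 1) (𝓝 ζ) := by
      have : Continuous (fun s : ℝ => (s * ζ : ℂ)) := by fun_prop
      have := this.tendsto 1
      simp only [ofReal_one, one_mul] at this
      exact this.mono_left nhdsWithin_le_nhds
    exact h1.tendsto.comp h2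
  · filter_upwards [Ioo_mem_nhdsLT (show (0:ℝ) < 1 by norm_num)] with s hs
    refine ⟨h.psi_ball (hin s hs), ?_⟩
    have hne : (frontier Ω).Nonempty := ⟨_, h.psi_sphere hζ⟩
    have e1 : c * (1 - s) ≤ infDist (ψ (s * ζ)) (frontier Ω) := by
      rw [le_infDist hne]
      intro ξ hξ
      rw [← h.psi_tau (frontier_subset_closure hξ)]
      refine le_trans ?_ (hl _ (ball_subset_closedBall (hin s hs)) _
        (h.tau_mem (frontier_subset_closure hξ)))
      gcongr
      have h3 : ‖tau ψ ξ‖ = 1 := by simpa using h.tau_sphere hξ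
      have h4 : ‖(s * ζ : ℂ)‖ = s := by simp [hζ1, abs_of_pos hs.1]
      rw [dist_eq_norm, norm_sub_rev]
      have := norm_sub_norm_le (tau ψ ξ) (s * ζ)
      rw [h3, h4] at this
      exact this
    have e2 : dist (ψ (s * ζ)) (ψ ζ) ≤ M * (1 - s) := by
      refine (hu _ (ball_subset_closedBall (hin s hs)) _ (sphere_subset_closedBall hζ)).trans ?_
      have : dist (s * ζ : ℂ) ζ = 1 - s := by
        rw [dist_eq_norm, show (s * ζ - ζ : ℂ) = ((s - 1 : ℝ) : ℂ) * ζ by push_cast; ring,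
          norm_mul, hζ1, mul_one, norm_real, Real.norm_eq_abs, abs_of_nonpos (by linarith [hs.2])]
        ring
      rw [this]
    refine e2.trans ?_
    have e3 : 0 ≤ infDist (ψ (s * ζ)) (frontier Ω) := infDist_nonneg
    have e4 : M * (1 - s) = M / c * (c * (1 - s)) := by field_simp
    rw [e4]
    have : 0 < M / c := div_pos hM hc
    calc M / c * (c * (1 - s)) ≤ M / c * infDist (ψ (s * ζ)) (frontier Ω) := by gcongr
      _ ≤ _ := by nlinarith

lemma circle_lower {a b : ℝ} (hab : |a - b| ≤ π) :
    2 / π * dist a b ≤ dist (circleMap 0 1 a) (circleMap 0 1 b) := by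
  have e : dist (circleMap 0 1 a) (circleMap 0 1 b) = 2 * |Real.sin ((a - b) / 2)| := by
    rw [dist_eq_norm]
    have : circleMap 0 1 a - circleMap 0 1 b =
        (Complex.exp (I * ((a - b : ℝ) : ℂ)) - 1) * circleMap 0 1 b := by
      simp only [circleMap, zero_add, ofReal_one, one_mul, sub_mul, ← Complex.exp_add]
      congr 2; push_cast; ring
    rw [this, norm_mul, norm_exp_I_mul_ofReal_sub_one]
    simp [abs_mul]
  rw [e, Real.dist_eq]
  have hx : 2 / π * (|a - b| / 2) ≤ Real.sin (|a - b| / 2) :=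
    Real.mul_le_sin (by positivity) (by linarith)
  have hs : Real.sin (|a - b| / 2) ≤ |Real.sin ((a - b) / 2)| := by
    rcases abs_cases (a - b) with ⟨h1, _⟩ | ⟨h1, _⟩
    · rw [h1]; exact le_abs_self _
    · rw [h1, neg_div, Real.sin_neg]; exact neg_le_abs _
  linarith

lemma CM.ae_circle (h : CM Ω U ψ) {P : ℂ → Prop} (hP : ∀ᵐ ξ ∂(arcLen Ω), P ξ) :
    ∀ᵐ θ ∂(volume.restrict (Ioc 0 (2 * π))), P (ψ (circleMap 0 1 θ)) := by
  obtain ⟨c, hc, hl⟩ := h.lower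
  have hN : (μH[1] : Measure ℂ) ({ξ | ¬ P ξ} ∩ frontier Ω) = 0 := by
    rw [arcLen, ae_iff, Measure.restrict_apply₀'] at hP
    · exact hP
    · exact isClosed_frontier.measurableSet.nullMeasurableSet
  have hcm : ∀ θ : ℝ, circleMap 0 1 θ ∈ sphere (0:ℂ) 1 := fun θ =>
    circleMap_mem_sphere 0 zero_le_one θ
  have key : ∀ x y : ℝ, y - x ≤ π →
      volume ({θ | ¬ P (ψ (circleMap 0 1 θ))} ∩ Ioc x y) = 0 := by
    intro x y hxy
    set γ : ℝ → ℂ := fun θ => ψ (circleMap 0 1 θ)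
    set A := {θ | ¬ P (γ θ)} ∩ Ioc x y
    have hlow : ∀ a ∈ A, ∀ b ∈ A, dist a b ≤ (π / 2 * c⁻¹) * dist (γ a) (γ b) := by
      intro a ha b hb
      have h1 := hl _ (sphere_subset_closedBall (hcm a)) _ (sphere_subset_closedBall (hcm b))
      have h2 : 2 / π * dist a b ≤ _ := circle_lower (a := a) (b := b) (by
        rw [abs_le]; constructor <;> linarith [ha.2.1, ha.2.2, hb.2.1, hb.2.2])
      have hpi := Real.pi_pos
      have h3 : c * (2 / π * dist a b) ≤ dist (γ a) (γ b) :=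
        le_trans (by gcongr) h1
      calc dist a b = (π / 2 * c⁻¹) * (c * (2 / π * dist a b)) := by field_simp
        _ ≤ _ := by gcongr
    have hpi := Real.pi_pos
    have hinj : InjOn γ A := by
      intro a ha b hb hab
      have := hlow a ha b hb
      rw [hab, dist_self, mul_zero] at this
      exact dist_le_zero.1 this
    have hlip : LipschitzOnWith (Real.toNNReal (π / 2 * c⁻¹)) (Function.invFunOn γ A) (γ '' A) := by
      apply LipschitzOnWith.of_dist_le_mul
      rintro _ ⟨a, ha, rfl⟩ _ ⟨b, hb, rfl⟩
      rw [hinj.leftInvOn_invFunOn ha, hinj.leftInvOn_invFunOn hb,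
        Real.coe_toNNReal _ (by positivity)]
      exact hlow a ha b hb
    have h4 := hlip.hausdorffMeasure_image_le (d := 1) zero_le_one
    have h5 : (μH[1] : Measure ℂ) (γ '' A) = 0 := by
      refine measure_mono_null ?_ hN
      rintro _ ⟨a, ha, rfl⟩
      exact ⟨ha.1, h.psi_sphere (hcm a)⟩
    rw [h5, mul_zero, nonpos_iff_eq_zero, hinj.leftInvOn_invFunOn.image_image,
      hausdorffMeasure_real] at h4
    exact h4
  rw [ae_iff, Measure.restrict_apply₀' measurableSet_Ioc.nullMeasurableSet]
  have hpi := Real.pi_pos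
  have : Ioc 0 (2 * π) = Ioc 0 π ∪ Ioc π (2 * π) := by
    rw [Ioc_union_Ioc_eq_Ioc] <;> linarith
  rw [this, inter_union_distrib_left]
  exact measure_union_null (key _ _ (by linarith)) (key _ _ (by linarith))

end

section

structure Tst (O : Set ℂ) (φ : ℂ → ℝ) : Prop where
  cd : ContDiff ℝ 2 φ
  cs : HasCompactSupport φ
  ts : tsupport φ ⊆ O

lemma cutoff {K O : Set ℂ} (hK : IsCompact K) (hO : IsOpen O) (h : K ⊆ O) :
    ∃ χ : ℂ → ℝ, Tst O χ ∧ (∀ᶠ x in 𝓝ˢ K, χ x = 1) ∧ ∀ x, χ x ∈ Icc (0:ℝ) 1 := by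
  obtain ⟨L, hL, hKL, hLO⟩ := exists_compact_between hK hO h
  obtain ⟨f, h1, h0, hf⟩ := exists_contMDiffMap_one_nhds_of_subset_interior (n := 2)
    (modelWithCornersSelf ℝ ℂ) hK.isClosed hKL
  have hsub : tsupport f ⊆ L := closure_minimal (fun x hx => by
    by_contra hc; exact hx (h0 x hc)) hL.isClosed
  exact ⟨f, ⟨f.contMDiff.contDiff, hL.of_isClosed_subset (isClosed_tsupport _) hsub,
    hsub.trans hLO⟩, h1, hf⟩

lemma lap_congr {φ χ : ℂ → ℝ} {z : ℂ} (h : φ =ᶠ[𝓝 z] χ) : lap φ z = lap χ z := by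
  have : ∀ v : ℂ, (fun w => fderiv ℝ φ w v) =ᶠ[𝓝 z] (fun w => fderiv ℝ χ w v) := by
    intro v
    filter_upwards [h.fderiv (𝕜 := ℝ)] with w hw using by rw [hw]
  rw [lap, lap, (this 1).fderiv_eq, (this I).fderiv_eq]

lemma lap_const (c : ℝ) (z : ℂ) : lap (fun _ => c) z = 0 := by simp [lap]

lemma lap_zero_off {φ : ℂ → ℝ} {z : ℂ} (hz : z ∉ tsupport φ) : lap φ z = 0 := by
  have : φ =ᶠ[𝓝 z] fun _ => 0 := notMem_tsupport_iff_eventuallyEq.1 hz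
  rw [lap_congr this, lap_const]

lemma lap_cs {φ : ℂ → ℝ} (hφ : HasCompactSupport φ) : HasCompactSupport (lap φ) :=
  HasCompactSupport.intro hφ (fun _ hx => lap_zero_off hx)

lemma lap_fd {φ : ℂ → ℝ} (hφ : ContDiff ℝ 2 φ) (v z : ℂ) :
    DifferentiableAt ℝ (fun w => fderiv ℝ φ w v) z :=
  ((hφ.fderiv_right (m := 1) (by norm_num)).clm_apply contDiff_const).differentiable one_ne_zero z

lemma lap_add {φ χ : ℂ → ℝ} (hφ : ContDiff ℝ 2 φ) (hχ : ContDiff ℝ 2 χ) (z : ℂ) :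
    lap (fun x => φ x + χ x) z = lap φ z + lap χ z := by
  have : ∀ v : ℂ, (fun w => fderiv ℝ (fun x => φ x + χ x) w v) =
      fun w => fderiv ℝ φ w v + fderiv ℝ χ w v := by
    intro v; ext w
    rw [fderiv_fun_add (hφ.differentiable two_ne_zero w) (hχ.differentiable two_ne_zero w)]; rfl
  rw [lap, this, this, fderiv_fun_add (lap_fd hφ _ _) (lap_fd hχ _ _),
    fderiv_fun_add (lap_fd hφ _ _) (lap_fd hχ _ _)]
  simp only [lap, add_apply]; ring

lemma lap_smul {φ : ℂ → ℝ} (hφ : ContDiff ℝ 2 φ) (c : ℝ) (z : ℂ) :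
    lap (fun x => c * φ x) z = c * lap φ z := by
  have : ∀ v : ℂ, (fun w => fderiv ℝ (fun x => c * φ x) w v) =
      fun w => c * fderiv ℝ φ w v := by
    intro v; ext w
    rw [fderiv_const_mul (hφ.differentiable two_ne_zero w)]; rfl
  rw [lap, this, this, fderiv_const_mul (lap_fd hφ _ _), fderiv_const_mul (lap_fd hφ _ _)]
  simp only [lap, smul_apply, smul_eq_mul]; ring

lemma lap_sq (z : ℂ) : lap (fun x => x.re ^ 2) z = 2 := by
  have h : ∀ w : ℂ, HasFDerivAt (fun x : ℂ => x.re ^ 2) ((2 * w.re) • Complex.reCLM) w := by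
    intro w
    have := (Complex.reCLM.hasFDerivAt (x := w)).pow 2
    simpa using this
  have : ∀ v : ℂ, (fun w => fderiv ℝ (fun x : ℂ => x.re ^ 2) w v) = fun w => (2 * v.re) * w.re := by
    intro v; ext w; rw [(h w).fderiv]; simp; ring
  have h2 : ∀ v : ℂ, fderiv ℝ (fun w : ℂ => (2 * v.re) * w.re) z = (2 * v.re) • Complex.reCLM := by
    intro v
    exact (Complex.reCLM.hasFDerivAt.const_mul _).fderiv
  rw [lap, this, this, h2, h2]
  simp

lemma integral_fd {φ : ℂ → ℝ} (hφ : ContDiff ℝ 1 φ) (hs : HasCompactSupport φ) (v : ℂ) :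
    ∫ z, fderiv ℝ φ z v = 0 := by
  have h1 : Integrable (fun z => fderiv ℝ φ z v) :=
    ((hφ.continuous_fderiv one_ne_zero).clm_apply continuous_const).integrable_of_hasCompactSupport
      ((hs.fderiv ℝ).comp_left (g := fun L : ℂ →L[ℝ] ℝ => L v) (by simp))
  have := integral_mul_fderiv_eq_neg_fderiv_mul_of_integrable (μ := (volume : Measure ℂ))
    (f := fun _ : ℂ => (1:ℝ)) (g := φ) (v := v) (by simp) (by simpa using h1)
    (by simpa using hφ.continuous.integrable_of_hasCompactSupport hs)
    (by simp) (fun x _ => hφ.differentiable one_ne_zero x)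
  simpa using this

lemma integral_lap {φ : ℂ → ℝ} (hφ : ContDiff ℝ 2 φ) (hs : HasCompactSupport φ) :
    ∫ z, lap φ z = 0 := by
  have hD : ∀ v, ContDiff ℝ 1 (fun w => fderiv ℝ φ w v) := fun v =>
    (hφ.fderiv_right (m := 1) (by norm_num)).clm_apply contDiff_const
  have hc : ∀ v, HasCompactSupport (fun w => fderiv ℝ φ w v) := fun v =>
    (hs.fderiv ℝ).comp_left (g := fun L : ℂ →L[ℝ] ℝ => L v) (by simp)
  have hint : ∀ v, Integrable (fun z => fderiv ℝ (fun w => fderiv ℝ φ w v) z v) := fun v =>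
    (((hD v).continuous_fderiv one_ne_zero).clm_apply
      continuous_const).integrable_of_hasCompactSupport
      (((hc v).fderiv ℝ).comp_left (g := fun L : ℂ →L[ℝ] ℝ => L v) (by simp))
  simp only [lap]
  rw [integral_add (hint 1) (hint I), integral_fd (hD 1) (hc 1), integral_fd (hD I) (hc I), add_zero]

/-- mollification -/
lemma mollify {V : ℂ → ℝ} (hV : Continuous V) (hs : HasCompactSupport V) {ε : ℝ} (hε : 0 < ε) :
    ∃ k : ℂ → ℝ, ContDiff ℝ 2 k ∧ HasCompactSupport k ∧ (∀ x, 0 ≤ k x) ∧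
      tsupport k ⊆ ball 0 ε ∧ (∀ z, |mol V k z - V z| ≤ ε) ∧
      HasCompactSupport (mol V k) ∧ tsupport (mol V k) ⊆ cthickening ε (tsupport V) := by
  obtain ⟨δ, hδ, huc⟩ := Metric.uniformContinuous_iff.1 (hs.uniformContinuous_of_continuous hV) ε hε
  let η := min δ ε / 2
  have hη : 0 < η := by positivity
  have hηδ : η < δ := by have := min_le_left δ ε; have := lt_min hδ hε; simp only [η]; linarith
  have hηε : η < ε := by have := min_le_right δ ε; have := lt_min hδ hε; simp only [η]; linarith
  let b : ContDiffBump (0:ℂ) := ⟨η / 2, η, by positivity, by linarith⟩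
  let k := b.normed volume
  have hk : ContDiff ℝ 2 k := b.contDiff_normed
  have hks : HasCompactSupport k := b.hasCompactSupport_normed
  have hkt : tsupport k ⊆ ball 0 ε := by
    rw [b.tsupport_normed_eq]; exact closedBall_subset_ball hηε
  have hk0 : ∀ t, k t ≠ 0 → ‖t‖ < η := by
    intro t ht
    have : t ∈ Function.support k := ht
    rw [b.support_normed_eq] at this
    simpa using this
  have hsupp : Function.support (mol V k) ⊆ cthickening ε (tsupport V) := by
    intro z hz
    by_contra hc
    apply hz
    rw [mol_apply']
    apply integral_eq_zero_of_ae
    refine Eventually.of_forall fun t => ?_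
    by_cases ht : k t = 0
    · simp [ht]
    · have : V (z - t) = 0 := by
        by_contra h0
        apply hc
        apply mem_cthickening_of_dist_le z (z - t) _ _ (subset_tsupport _ h0)
        simpa using ((hk0 t ht).trans hηε).le
      simp [this]
  have hts : tsupport (mol V k) ⊆ cthickening ε (tsupport V) :=
    closure_minimal hsupp isClosed_cthickening
  refine ⟨k, hk, hks, b.nonneg_normed, hkt, fun z => ?_,
    (hs.isCompact.cthickening).of_isClosed_subset (isClosed_tsupport _) hts, hts⟩
  have i1 : Integrable (fun t => V (z - t) * k t) :=
    Continuous.integrable_of_hasCompactSupport (by have := hk.continuous; fun_prop) hks.mul_left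
  have i2 : Integrable (fun t => V z * k t) := b.integrable_normed.const_mul _
  have e1 : V z = ∫ t, V z * k t := by
    rw [integral_const_mul, b.integral_normed, mul_one]
  rw [mol_apply']
  conv_lhs => rw [e1]
  rw [← integral_sub i1 i2, ← Real.norm_eq_abs]
  have : ∫ t, ε * k t = ε := by rw [integral_const_mul, b.integral_normed, mul_one]
  refine (norm_integral_le_of_norm_le (b.integrable_normed.const_mul ε)
    (Eventually.of_forall fun t => ?_)).trans this.le
  rw [← sub_mul, norm_mul, Real.norm_of_nonneg (b.nonneg_normed t)]
  by_cases ht : k t = 0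
  · simp [k] at ht; simp [ht]
  · apply mul_le_mul_of_nonneg_right _ (b.nonneg_normed t)
    have := huc (a := z - t) (b := z) (by simpa using (hk0 t ht).trans hηδ)
    rw [← dist_eq_norm]; exact this.le

lemma meas_le {M1 M2 : Measure ℂ} [IsFiniteMeasure M1] [IsFiniteMeasure M2] {O : Set ℂ}
    (hO : IsOpen O) (h : ∀ φ, Tst O φ → (∀ x, 0 ≤ φ x) → ∫ z, φ z ∂M1 ≤ ∫ z, φ z ∂M2)
    {A : Set ℂ} (hA : MeasurableSet A) (hAO : A ⊆ O) : M1 A ≤ M2 A := by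
  have key : ∀ K V : Set ℂ, IsCompact K → IsOpen V → K ⊆ V → V ⊆ O → M1 K ≤ M2 V := by
    intro K V hK hV hKV hVO
    obtain ⟨χ, hχ, h1, h01⟩ := cutoff hK hV hKV
    have hi : ∀ M : Measure ℂ, IsFiniteMeasure M → Integrable χ M := fun M _ =>
      hχ.cd.continuous.integrable_of_hasCompactSupport hχ.cs
    have h2 := h χ ⟨hχ.cd, hχ.cs, hχ.ts.trans hVO⟩ (fun x => (h01 x).1)
    have h3 : M1.real K ≤ ∫ z, χ z ∂M1 := by
      rw [← integral_indicator_one hK.measurableSet]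
      apply integral_mono _ (hi M1 inferInstance)
      · intro z
        by_cases hz : z ∈ K
        · simp [hz, h1.self_of_nhdsSet z hz]
        · simp [hz, (h01 z).1]
      · exact (integrable_const (1:ℝ)).indicator hK.measurableSet
    have h4 : ∫ z, χ z ∂M2 ≤ M2.real V := by
      rw [← integral_indicator_one hV.measurableSet]
      apply integral_mono (hi M2 inferInstance)
      · exact (integrable_const (1:ℝ)).indicator hV.measurableSet
      · intro z
        by_cases hz : z ∈ V
        · simp [hz, (h01 z).2]
        · have : χ z = 0 := image_eq_zero_of_notMem_tsupport (fun hc => hz (hχ.ts hc))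
          simp [hz, this]
    have := h3.trans (h2.trans h4)
    simp only [Measure.real] at this
    rwa [ENNReal.toReal_le_toReal (measure_ne_top _ _) (measure_ne_top _ _)] at this
  rw [hA.measure_eq_iSup_isCompact_of_ne_top (measure_ne_top M1 A), Set.measure_eq_iInf_isOpen A M2]
  refine iSup₂_le fun K hKA => iSup_le fun hK => le_iInf₂ fun V hV => le_iInf fun hVo => ?_
  exact (key K (V ∩ O) hK (hVo.inter hO) (fun x hx => ⟨hV (hKA hx), hAO (hKA hx)⟩)
    inter_subset_right).trans (measure_mono inter_subset_left)

end

section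

structure Ex (u : ℂ → ℝ) (Ω : Set ℂ) : Prop where
  op : IsOpen Ω
  ne : Ω.Nonempty
  neg : ∀ z ∈ Ω, u z < 0
  cont : ContinuousOn u Ω
  exh : ∀ c : ℝ, c < 0 → IsCompact (closure {z | z ∈ Ω ∧ u z < c}) ∧
    closure {z | z ∈ Ω ∧ u z < c} ⊆ Ω

variable {u : ℂ → ℝ} {Ω : Set ℂ}

lemma Ex.maxr (e : Ex u Ω) {r : ℝ} (hr : r < 0) : Ex (fun z => max (u z) r) Ω where
  op := e.op
  ne := e.ne
  neg := fun z hz => max_lt (e.neg z hz) hr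
  cont := e.cont.sup continuousOn_const
  exh := by
    intro c hc
    have hsub : closure {z | z ∈ Ω ∧ Max.max (u z) r < c} ⊆ closure {z | z ∈ Ω ∧ u z < c} :=
      closure_mono (fun z hz => ⟨hz.1, (le_max_left _ _).trans_lt hz.2⟩)
    exact ⟨(e.exh c hc).1.of_isClosed_subset isClosed_closure hsub, hsub.trans (e.exh c hc).2⟩

lemma Tst.cont_mul {O : Set ℂ} {φ w : ℂ → ℝ} (hO : IsOpen O) (hφ : Continuous φ)
    (ht : tsupport φ ⊆ O) (hw : ContinuousOn w O) : Continuous (fun z => w z * φ z) := by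
  rw [continuous_iff_continuousAt]
  intro z
  by_cases hz : z ∈ tsupport φ
  · exact ((hw.continuousAt (hO.mem_nhds (ht hz))).mul hφ.continuousAt)
  · have : (fun z => w z * φ z) =ᶠ[𝓝 z] fun _ => 0 := by
      filter_upwards [notMem_tsupport_iff_eventuallyEq.1 hz] with y hy
      simp [hy]
    exact this.continuousAt

lemma lap_ts {φ : ℂ → ℝ} : tsupport (lap φ) ⊆ tsupport φ :=
  closure_minimal (fun x hx => by by_contra hc; exact hx (lap_zero_off hc)) (isClosed_tsupport _)

lemma Tst.int_lap {O : Set ℂ} {φ w : ℂ → ℝ} (hO : IsOpen O) (hφ : Tst O φ)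
    (hw : ContinuousOn w O) : Integrable (fun z => w z * lap φ z) :=
  (Tst.cont_mul hO (lap_cont hφ.cd) (lap_ts.trans hφ.ts) hw).integrable_of_hasCompactSupport
    (lap_cs hφ.cs).mul_left

lemma setInt_lap {O : Set ℂ} {φ w : ℂ → ℝ} (ht : tsupport φ ⊆ O) :
    ∫ z in O, w z * lap φ z = ∫ z, w z * lap φ z := by
  apply setIntegral_eq_integral_of_forall_compl_eq_zero
  intro x hx
  rw [lap_zero_off (fun hc => hx (ht hc)), mul_zero]

lemma lap_refl {k : ℂ → ℝ} (z t : ℂ) : lap (fun t => k (z - t)) t = lap k (z - t) := by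
  have h1 : ∀ (g : ℂ → ℝ) (t : ℂ), fderiv ℝ (fun t => g (z - t)) t = - fderiv ℝ g (z - t) :=
    fun g t => by
      have a : fderiv ℝ (fun t => g (z + -t)) t = - fderiv ℝ (fun y : ℂ => g (z + y)) (-t) := by
        have := (ContinuousLinearEquiv.neg ℝ (M := ℂ)).comp_right_fderiv
          (f := fun y : ℂ => g (z + y)) (x := t)
        have h3 : ((fun y : ℂ => g (z + y)) ∘ (ContinuousLinearEquiv.neg ℝ (M := ℂ))) =
          fun t => g (z + -t) := rfl
        rw [h3] at this
        rw [this]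
        ext v
        simp
      have b := fderiv_comp_add_left (𝕜 := ℝ) (f := g) (x := -t) z
      simp only [← sub_eq_add_neg] at a b
      rw [a, b]
  have h2 : ∀ v : ℂ, (fun w => fderiv ℝ (fun t => k (z - t)) w v) =
      fun w => (fun x => - fderiv ℝ k x v) (z - w) := by
    intro v; ext w; rw [h1]; rfl
  rw [lap, h2, h2, h1 (fun x => - fderiv ℝ k x 1), h1 (fun x => - fderiv ℝ k x I)]
  simp only [lap]
  have h3 : ∀ v : ℂ, fderiv ℝ (fun x => - fderiv ℝ k x v) (z - t) =
      - fderiv ℝ (fun x => fderiv ℝ k x v) (z - t) := fun v => fderiv_fun_neg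
  rw [h3, h3]
  simp

lemma Ex.nonharm (e : Ex u Ω) : ∃ φ, Tst Ω φ ∧ ∫ z in Ω, u z * lap φ z ≠ 0 := by
  by_contra hcon
  push Not at hcon
  obtain ⟨x1, hx1⟩ := e.ne
  have hm1 := e.neg x1 hx1
  set m := u x1
  obtain ⟨hKc, hKΩ⟩ := e.exh (m / 2) (by linarith)
  set B := {z | z ∈ Ω ∧ u z < m / 2}
  have hBo : IsOpen B := e.cont.isOpen_inter_preimage e.op isOpen_Iio
  set K := closure B
  have hx1K : x1 ∈ K := subset_closure ⟨hx1, by linarith⟩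
  obtain ⟨χ, hχ, hχ1, h01⟩ := cutoff hKc e.op hKΩ
  have hVc : Continuous (fun z => u z * χ z) := Tst.cont_mul e.op hχ.cd.continuous hχ.ts e.cont
  obtain ⟨W, hWo, hKW, hW1⟩ := mem_nhdsSet_iff_exists.1 hχ1
  obtain ⟨δ, hδ, hδW⟩ := hKc.exists_thickening_subset_open (hWo.inter e.op)
    (subset_inter hKW hKΩ)
  obtain ⟨ε, hε, hεδ, hεm⟩ : ∃ ε > 0, ε ≤ δ ∧ ε ≤ -m / 16 :=
    ⟨min δ (-m / 16), lt_min hδ (by linarith), min_le_left _ _, min_le_right _ _⟩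
  obtain ⟨k, hk, hks, hk0, hkt, hkV, -, -⟩ := mollify hVc hχ.cs.mul_left hε
  set g := mol (fun z => u z * χ z) k
  have hgc : ContDiff ℝ 2 g := mol_contDiff hVc hk hks
  have hlap : ∀ z ∈ K, lap g z = 0 := by
    intro z hz
    have htst : Tst Ω (fun t => k (z - t)) := by
      have hts : tsupport (fun t => k (z - t)) ⊆ closedBall z ε := by
        apply closure_minimal _ isClosed_closedBall
        intro t ht
        have := hkt (subset_tsupport k (show k (z - t) ≠ 0 from ht))
        rw [mem_closedBall, dist_comm, dist_eq_norm]
        simpa using (mem_ball_zero_iff.1 this).le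
      have hts2 : tsupport (fun t => k (z - t)) ⊆ (fun t => z - t) ⁻¹' (tsupport k) := by
        apply closure_minimal _ ((isClosed_tsupport k).preimage (by fun_prop))
        intro t ht
        exact subset_tsupport k ht
      refine ⟨hk.comp (contDiff_const.sub contDiff_id),
        (isCompact_closedBall z ε).of_isClosed_subset (isClosed_tsupport _) hts, ?_⟩
      intro t ht
      have := mem_ball_zero_iff.1 (hkt (hts2 ht))
      refine (hδW (mem_thickening_iff.2 ⟨z, hz, ?_⟩)).2
      rw [dist_comm, dist_eq_norm]; exact this.trans_le hεδ
    have h1 := hcon _ htst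
    rw [setInt_lap htst.ts] at h1
    rw [lap_mol hVc hk hks, ← h1]
    congr 1; ext t
    rw [lap_refl]
    by_cases ht : z - t ∈ tsupport k
    · have h2 := mem_ball_zero_iff.1 (hkt ht)
      have h3 : χ t = 1 := hW1 (hδW (mem_thickening_iff.2 ⟨z, hz, by
        rw [dist_comm, dist_eq_norm]; exact h2.trans_le hεδ⟩)).1
      rw [h3, mul_one]
    · rw [lap_zero_off ht]; simp
  obtain ⟨D, hD⟩ := hKc.exists_bound_of_continuousOn (f := fun z : ℂ => z.re ^ 2)
    (by fun_prop)
  have hD0 : 0 ≤ D := (norm_nonneg _).trans (hD x1 hx1K)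
  let η := -m / 16 / (D + 1)
  have hη : 0 < η := div_pos (by linarith) (by linarith)
  have hηD : η * D ≤ -m / 16 := by
    have : η * (D + 1) = -m / 16 := by simp only [η]; field_simp
    nlinarith
  let q : ℂ → ℝ := fun z => g z + (-η) * z.re ^ 2
  have hre : ContDiff ℝ 2 (fun z : ℂ => z.re ^ 2) := (Complex.reCLM.contDiff).pow 2
  have hqc : ContDiff ℝ 2 q := hgc.add (contDiff_const.mul hre)
  obtain ⟨x, hxK, hmin⟩ := hKc.exists_isMinOn ⟨x1, hx1K⟩ hqc.continuous.continuousOn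
  have hgK : ∀ z ∈ K, |g z - u z| ≤ ε := by
    intro z hz
    have := hkV z
    rwa [hχ1.self_of_nhdsSet z hz, mul_one] at this
  have hxB : x ∈ B := by
    refine ⟨hKΩ hxK, ?_⟩
    have h1 : q x ≤ q x1 := hmin hx1K
    have h2 := abs_le.1 (hgK x hxK)
    have h3 := abs_le.1 (hgK x1 hx1K)
    have h4 := hD x hxK
    rw [Real.norm_of_nonneg (sq_nonneg _)] at h4
    have h5 : η * x.re ^ 2 ≤ η * D := by gcongr
    have h6 : 0 ≤ η * x1.re ^ 2 := by positivity
    simp only [q] at h1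
    have h7 : u x1 = m := rfl
    linarith [h2.1, h2.2, h3.1, h3.2]
  have hneg : lap q x = -η * 2 := by
    have e1 := lap_add hgc (contDiff_const (c := -η) |>.mul hre) x
    have e2 := lap_smul hre (-η) x
    rw [lap_sq] at e2
    rw [hlap x hxK, e2] at e1
    rw [zero_add] at e1; exact e1
  have hpos : 0 ≤ lap q x := by
    apply lap_nonneg hqc
    obtain ⟨ρ0, hρ0, hb⟩ := Metric.isOpen_iff.1 hBo x hxB
    filter_upwards [Ioo_mem_nhdsGT hρ0] with ρ hρ
    have hci : CircleIntegrable q x ρ := hqc.continuous.continuousOn.circleIntegrable'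
    have := Real.circleAverage_mono (c := x) (R := ρ) (f₁ := fun _ => q x) (f₂ := q)
      (circleIntegrable_const _ _ _) hci (fun y hy => hmin (subset_closure (hb (by
        rw [mem_sphere, abs_of_pos hρ.1] at hy
        rw [mem_ball, hy]; exact hρ.2))))
    rwa [Real.circleAverage_const] at this
  linarith

lemma Ex.integrable (e : Ex u Ω) {M : Measure ℂ} (hM : IsRieszMeasure u Ω M) {φ : ℂ → ℝ}
    (hφ : Tst Ω φ) : Integrable φ M := by
  by_contra hni
  obtain ⟨φ0, h0, hne⟩ := e.nonharm
  have e0 := hM.2 φ0 h0.cd h0.cs h0.ts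
  have hi0 : Integrable φ0 M := by
    by_contra hc
    rw [integral_undef hc] at e0
    apply hne; linarith
  have e1 := hM.2 φ hφ.cd hφ.cs hφ.ts
  have hts : tsupport (fun x => φ x + φ0 x) ⊆ Ω :=
    (tsupport_add φ φ0).trans (union_subset hφ.ts h0.ts)
  have e2 := hM.2 (fun x => φ x + φ0 x) (hφ.cd.add h0.cd) (hφ.cs.add h0.cs) hts
  rw [integral_undef hni] at e1
  have hni2 : ¬ Integrable (fun x => φ x + φ0 x) M := by
    intro hc
    apply hni
    have := hc.sub hi0
    refine this.congr (Eventually.of_forall fun x => ?_)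
    simp
  rw [integral_undef hni2] at e2
  have e3 : ∫ z in Ω, u z * lap (fun x => φ x + φ0 x) z =
      (∫ z in Ω, u z * lap φ z) + ∫ z in Ω, u z * lap φ0 z := by
    rw [← integral_add (hφ.int_lap e.op e.cont).integrableOn (h0.int_lap e.op e.cont).integrableOn]
    congr 1; ext z
    rw [lap_add hφ.cd h0.cd]; ring
  apply hne
  linarith

end

section

variable {u : ℂ → ℝ} {Ω : Set ℂ}

lemma Ex.Kle (e : Ex u Ω) {r : ℝ} (hr : r < 0) : IsCompact {z | z ∈ Ω ∧ u z ≤ r} := by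
  obtain ⟨hc, hs⟩ := e.exh (r / 2) (by linarith)
  have : {z | z ∈ Ω ∧ u z ≤ r} = closure {z | z ∈ Ω ∧ u z < r / 2} ∩ u ⁻¹' Iic r := by
    ext z
    constructor
    · rintro ⟨h1, h2⟩
      exact ⟨subset_closure ⟨h1, by linarith⟩, h2⟩
    · rintro ⟨h1, h2⟩
      exact ⟨hs h1, h2⟩
  rw [this]
  exact hc.of_isClosed_subset
    ((e.cont.mono hs).preimage_isClosed_of_isClosed hc.isClosed isClosed_Iic) inter_subset_left

lemma riesz_eq {v w : ℂ → ℝ} {M1 M2 : Measure ℂ} (h1 : IsRieszMeasure v Ω M1)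
    (h2 : IsRieszMeasure w Ω M2) {φ : ℂ → ℝ} (hφ : Tst Ω φ)
    (h : ∀ z ∈ Ω, lap φ z ≠ 0 → v z = w z) : ∫ z, φ z ∂M1 = ∫ z, φ z ∂M2 := by
  rw [h1.2 φ hφ.cd hφ.cs hφ.ts, h2.2 φ hφ.cd hφ.cs hφ.ts]
  congr 1
  rw [setInt_lap hφ.ts, setInt_lap hφ.ts]
  congr 1; ext z
  by_cases hz : z ∈ tsupport φ
  · by_cases h0 : lap φ z = 0
    · simp [h0]
    · rw [h z (hφ.ts hz) h0]
  · simp [lap_zero_off hz]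

lemma Ex.finite (e : Ex u Ω) {ν νr : Measure ℂ} [IsFiniteMeasure ν] (hν : IsRieszMeasure u Ω ν)
    {r : ℝ} (hr : r < 0) (hνr : IsRieszMeasure (fun z => max (u z) r) Ω νr) :
    IsFiniteMeasure νr := by
  have key : ∀ K, IsCompact K → K ⊆ Ω → νr K ≤ ν univ := by
    intro K hK hKΩ
    have hK2 := hK.union (e.Kle hr)
    obtain ⟨χ, hχ, h1, h01⟩ := cutoff hK2 e.op (union_subset hKΩ (fun z hz => hz.1))
    have hi := (e.maxr hr).integrable hνr hχ
    have heq : ∫ z, χ z ∂νr = ∫ z, χ z ∂ν := by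
      apply riesz_eq hνr hν hχ
      intro z hz hl
      by_contra hne
      have hur : u z ≤ r := by
        by_contra hc
        exact hne (max_eq_left (le_of_not_ge hc))
      apply hl
      have : χ =ᶠ[𝓝 z] fun _ => (1:ℝ) := by
        have := (eventually_nhdsSet_iff_forall.1 h1) z (Or.inr ⟨hz, hur⟩)
        exact this
      rw [lap_congr this, lap_const]
    have h2 : ∫ z, χ z ∂ν ≤ (ν univ).toReal := by
      have : ∫ z, χ z ∂ν ≤ ∫ z, (1:ℝ) ∂ν := integral_mono
        (hχ.cd.continuous.integrable_of_hasCompactSupport hχ.cs) (integrable_const _)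
        (fun x => (h01 x).2)
      simpa [Measure.real] using this
    have h3 : νr K ≤ ENNReal.ofReal (∫ z, χ z ∂νr) := by
      rw [ofReal_integral_eq_lintegral_ofReal hi (Eventually.of_forall fun x => (h01 x).1)]
      calc νr K = ∫⁻ z in K, 1 ∂νr := by simp
        _ ≤ ∫⁻ z in K, ENNReal.ofReal (χ z) ∂νr := by
            apply setLIntegral_mono' hK.measurableSet
            intro z hz
            rw [h1.self_of_nhdsSet z (Or.inl hz)]; simp
        _ ≤ _ := setLIntegral_le_lintegral _ _
    refine h3.trans ?_
    rw [heq]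
    exact ENNReal.ofReal_le_of_le_toReal h2
  have hΩ : Ω = ⋃ n : ℕ, {z | z ∈ Ω ∧ u z ≤ -(1 / ((n:ℝ) + 1))} := by
    ext z
    simp only [mem_iUnion, Set.mem_ofPred_eq]
    constructor
    · intro hz
      obtain ⟨n, hn⟩ := exists_nat_one_div_lt (show (0:ℝ) < - u z by linarith [e.neg z hz])
      exact ⟨n, hz, by linarith⟩
    · rintro ⟨n, h, _⟩; exact h
  have hmono : Monotone (fun n : ℕ => {z | z ∈ Ω ∧ u z ≤ -(1 / ((n:ℝ) + 1))}) := by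
    intro n m hnm z hz
    refine ⟨hz.1, hz.2.trans ?_⟩
    have : 1 / ((m:ℝ) + 1) ≤ 1 / ((n:ℝ) + 1) := by gcongr
    linarith
  have hle : νr Ω ≤ ν univ := by
    rw [hΩ, hmono.measure_iUnion]
    refine iSup_le fun n => key _ (e.Kle ?_) (fun z hz => hz.1)
    have : 0 < 1 / ((n:ℝ) + 1) := by positivity
    linarith
  constructor
  calc νr univ ≤ νr Ω + νr Ωᶜ := by
        have := measure_union_le (μ := νr) Ω Ωᶜ; rwa [union_compl_self] at this
    _ ≤ ν univ := by rw [hνr.1, add_zero]; exact hle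
    _ < ⊤ := measure_lt_top _ _

lemma Ex.meas_ge (e : Ex u Ω) (r : ℝ) : MeasurableSet {z | z ∈ Ω ∧ r ≤ u z} := by
  have : {z | z ∈ Ω ∧ r ≤ u z} = Ω \ {z | z ∈ Ω ∧ u z < r} := by
    ext z; simp only [Set.mem_ofPred_eq, Set.mem_sdiff, not_and, not_lt]
    tauto
  rw [this]
  exact e.op.measurableSet.diff (e.cont.isOpen_inter_preimage e.op isOpen_Iio).measurableSet

lemma Ex.restr_le (e : Ex u Ω) {ν : Measure ℂ} [IsFiniteMeasure ν] (hν : IsRieszMeasure u Ω ν)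
    (hex : ∀ t < 0, ∃ M, IsRieszMeasure (fun z => max (u z) t) Ω M)
    {r : ℝ} (hr : r < 0) {νr : Measure ℂ} (hνr : IsRieszMeasure (fun z => max (u z) r) Ω νr) :
    ν.restrict {z | z ∈ Ω ∧ r ≤ u z} ≤ νr := by
  have := e.finite hν hr hνr
  set E := {z | z ∈ Ω ∧ r ≤ u z}
  have hE := e.meas_ge r
  have hmain : ∀ φ, Tst Ω φ → (∀ x, 0 ≤ φ x) → ∫ z in E, φ z ∂ν ≤ ∫ z, φ z ∂νr := by
    intro φ hφ h0
    have hlim : Tendsto (fun t : ℝ => (4:ℝ)⁻¹ * ∫ z, max (u z) t * lap φ z) (𝓝[<] r)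
        (𝓝 ((4:ℝ)⁻¹ * ∫ z, max (u z) r * lap φ z)) := by
      apply Tendsto.const_mul
      have hc : ∀ t : ℝ, ContinuousOn (fun z => max (u z) t) Ω := fun t => e.cont.sup continuousOn_const
      have hi : ∀ t : ℝ, Integrable (fun z => max (u z) t * lap φ z) := fun t =>
        hφ.int_lap e.op (hc t)
      have hil : Integrable (lap φ) :=
        (lap_cont hφ.cd).integrable_of_hasCompactSupport (lap_cs hφ.cs)
      rw [tendsto_iff_norm_sub_tendsto_zero]
      have hb : ∀ t : ℝ, ‖(∫ z, max (u z) t * lap φ z) - ∫ z, max (u z) r * lap φ z‖ ≤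
          |t - r| * ∫ z, |lap φ z| := by
        intro t
        rw [← integral_sub (hi t) (hi r), ← integral_const_mul]
        refine norm_integral_le_of_norm_le (hil.abs.const_mul _) (Eventually.of_forall fun z => ?_)
        rw [← sub_mul, norm_mul, Real.norm_eq_abs, Real.norm_eq_abs]
        refine mul_le_mul_of_nonneg_right ?_ (abs_nonneg _)
        have := abs_max_sub_max_le_max (u z) t (u z) r
        simpa using this
      refine squeeze_zero (fun t => norm_nonneg _) hb ?_
      have : Continuous (fun t : ℝ => |t - r| * ∫ z, |lap φ z|) := by fun_prop
      have := this.tendsto r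
      simp only [sub_self, abs_zero, zero_mul] at this
      exact this.mono_left nhdsWithin_le_nhds
    rw [hνr.2 φ hφ.cd hφ.cs hφ.ts, setInt_lap hφ.ts]
    refine ge_of_tendsto hlim ?_
    filter_upwards [self_mem_nhdsWithin] with t ht
    have ht : t < r := ht
    obtain ⟨M, hM⟩ := hex t (by linarith)
    have := e.finite hν (by linarith : t < 0) hM
    have hO : IsOpen {z | z ∈ Ω ∧ t < u z} := e.cont.isOpen_inter_preimage e.op isOpen_Ioi
    have hcomp : IsCompact (tsupport φ ∩ {z | z ∈ Ω ∧ r ≤ u z}) := by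
      have : tsupport φ ∩ {z | z ∈ Ω ∧ r ≤ u z} = tsupport φ ∩ u ⁻¹' Ici r := by
        ext z; constructor
        · rintro ⟨a, b⟩; exact ⟨a, b.2⟩
        · rintro ⟨a, b⟩; exact ⟨a, hφ.ts a, b⟩
      rw [this]
      exact hφ.cs.isCompact.of_isClosed_subset ((e.cont.mono hφ.ts).preimage_isClosed_of_isClosed
        (isClosed_tsupport _) isClosed_Ici) inter_subset_left
    obtain ⟨θ, hθ, hθ1, hθ01⟩ := cutoff hcomp hO (fun z hz => ⟨hz.2.1, ht.trans_le hz.2.2⟩)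
    have hφθ : Tst Ω (fun z => φ z * θ z) :=
      ⟨hφ.cd.mul hθ.cd, hφ.cs.mul_right, (tsupport_mul_subset_left).trans hφ.ts⟩
    have hts : tsupport (fun z => φ z * θ z) ⊆ {z | z ∈ Ω ∧ t < u z} :=
      (tsupport_mul_subset_right).trans hθ.ts
    have heq := riesz_eq hM hν hφθ (by
      intro z _ hl
      have : z ∈ tsupport (fun z => φ z * θ z) := by
        by_contra hc; exact hl (lap_zero_off hc)
      exact max_eq_left (hts this).2.le)
    have i : ∀ (N : Measure ℂ) [IsFiniteMeasure N], Integrable (fun z => φ z * θ z) N := fun N _ =>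
      hφθ.cd.continuous.integrable_of_hasCompactSupport hφθ.cs
    have i2 : ∀ (N : Measure ℂ) [IsFiniteMeasure N], Integrable φ N := fun N _ =>
      hφ.cd.continuous.integrable_of_hasCompactSupport hφ.cs
    calc ∫ z in E, φ z ∂ν = ∫ z in E, φ z * θ z ∂ν := by
          apply setIntegral_congr_fun hE
          intro z hz
          by_cases hzt : z ∈ tsupport φ
          · simp [hθ1.self_of_nhdsSet z ⟨hzt, hz⟩]
          · simp [image_eq_zero_of_notMem_tsupport hzt]
      _ ≤ ∫ z, φ z * θ z ∂ν := setIntegral_le_integral (i ν)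
          (Eventually.of_forall fun z => mul_nonneg (h0 z) (hθ01 z).1)
      _ = ∫ z, φ z * θ z ∂M := heq.symm
      _ ≤ ∫ z, φ z ∂M := integral_mono (i M) (i2 M)
          (fun z => mul_le_of_le_one_right (h0 z) (hθ01 z).2)
      _ = _ := by rw [hM.2 φ hφ.cd hφ.cs hφ.ts, setInt_lap hφ.ts]
  rw [Measure.le_iff]
  intro A hA
  have h1 : ν.restrict E A = ν.restrict E (A ∩ Ω) := by
    rw [Measure.restrict_apply hA, Measure.restrict_apply (hA.inter e.op.measurableSet)]
    congr 1
    ext z; constructor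
    · rintro ⟨a, b⟩; exact ⟨⟨a, b.1⟩, b⟩
    · rintro ⟨⟨a, _⟩, b⟩; exact ⟨a, b⟩
  rw [h1]
  exact (meas_le e.op hmain (hA.inter e.op.measurableSet) inter_subset_right).trans
    (measure_mono inter_subset_left)

/-- Properties of the Monge-Ampere measure. -/
structure MAP (u : ℂ → ℝ) (Ω : Set ℂ) (ν : Measure ℂ) (r : ℝ) (μ : Measure ℂ) : Prop where
  fin : IsFiniteMeasure μ
  supp : μ {z | z ∈ Ω ∧ u z = r}ᶜ = 0
  riesz : IsRieszMeasure (fun z => max (u z) r) Ω (μ + ν.restrict {z | z ∈ Ω ∧ r ≤ u z})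

lemma Ex.map (e : Ex u Ω) {ν : Measure ℂ} [IsFiniteMeasure ν] (hν : IsRieszMeasure u Ω ν)
    {μfam : ℝ → Measure ℂ} (hμ : ∀ r : ℝ, r < 0 → IsMAMeasure u Ω ν r (μfam r)) {r : ℝ}
    (hr : r < 0) : MAP u Ω ν r (μfam r) := by
  obtain ⟨νr, hνr, heq⟩ := hμ r hr
  have hle := e.restr_le hν (fun t ht => (hμ t ht).imp fun M hM => hM.1) hr hνr
  have hfin := e.finite hν hr hνr
  set E := {z | z ∈ Ω ∧ r ≤ u z}
  have hE : MeasurableSet E := e.meas_ge r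
  have hadd : μfam r + ν.restrict E = νr := by rw [heq]; exact Measure.sub_add_cancel_of_le hle
  have hμle : μfam r ≤ νr := by rw [← hadd]; exact Measure.le_add_right le_rfl
  refine ⟨isFiniteMeasure_of_le νr hμle, ?_, by rw [hadd]; exact hνr⟩
  have hsub : {z | z ∈ Ω ∧ u z = r}ᶜ ⊆ Ωᶜ ∪ ({z | z ∈ Ω ∧ r < u z} ∪ {z | z ∈ Ω ∧ u z < r}) := by
    intro z hz
    by_cases hzΩ : z ∈ Ω
    · right
      rcases lt_trichotomy (u z) r with h | h | h
      · exact Or.inr ⟨hzΩ, h⟩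
      · exact absurd ⟨hzΩ, h⟩ hz
      · exact Or.inl ⟨hzΩ, h⟩
    · exact Or.inl hzΩ
  have hOg : IsOpen {z | z ∈ Ω ∧ r < u z} := e.cont.isOpen_inter_preimage e.op isOpen_Ioi
  have hOl : IsOpen {z | z ∈ Ω ∧ u z < r} := e.cont.isOpen_inter_preimage e.op isOpen_Iio
  refine measure_mono_null hsub (measure_union_null ?_ (measure_union_null ?_ ?_))
  · exact le_antisymm ((hμle _).trans hνr.1.le) (zero_le)
  · have h1 : νr {z | z ∈ Ω ∧ r < u z} ≤ ν {z | z ∈ Ω ∧ r < u z} := by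
      apply meas_le hOg _ hOg.measurableSet subset_rfl
      intro φ hφ _
      apply le_of_eq
      apply riesz_eq hνr hν ⟨hφ.cd, hφ.cs, hφ.ts.trans fun z hz => hz.1⟩
      intro z _ hl
      have : z ∈ tsupport φ := by
        by_contra hc; exact hl (lap_zero_off hc)
      exact max_eq_left (hφ.ts this).2.le
    have h2 : ν.restrict E {z | z ∈ Ω ∧ r < u z} = ν {z | z ∈ Ω ∧ r < u z} := by
      rw [Measure.restrict_apply hOg.measurableSet, inter_eq_left.2]
      exact fun z hz => ⟨hz.1, hz.2.le⟩
    rw [← hadd, Measure.add_apply, h2] at h1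
    by_contra hne
    have : ν {z | z ∈ Ω ∧ r < u z} < μfam r {z | z ∈ Ω ∧ r < u z} + ν {z | z ∈ Ω ∧ r < u z} := by
      rw [add_comm]
      exact ENNReal.lt_add_right (measure_ne_top _ _) hne
    exact absurd h1 (not_le.2 this)
  · have h1 : νr {z | z ∈ Ω ∧ u z < r} ≤ (0 : Measure ℂ) {z | z ∈ Ω ∧ u z < r} := by
      apply meas_le hOl _ hOl.measurableSet subset_rfl
      intro φ hφ _
      rw [hνr.2 φ hφ.cd hφ.cs (hφ.ts.trans fun z hz => hz.1),
        setInt_lap (hφ.ts.trans fun z hz => hz.1)]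
      have : ∀ z, max (u z) r * lap φ z = r * lap φ z := by
        intro z
        by_cases hz : z ∈ tsupport φ
        · rw [max_eq_right (hφ.ts hz).2.le]
        · simp [lap_zero_off hz]
      simp [this, integral_const_mul, integral_lap hφ.cd hφ.cs]
    exact le_antisymm ((hμle _).trans h1) (zero_le)

lemma Ex.claimB (e : Ex u Ω) {ν μ : Measure ℂ} [IsFiniteMeasure ν] (hν : IsRieszMeasure u Ω ν)
    {r : ℝ} (hr : r < 0) (hm : MAP u Ω ν r μ) {w : ℂ → ℝ} (hw : ContinuousOn w Ω) (hLS : LS w Ω) :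
    ∫ z in {z | z ∈ Ω ∧ u z < r}, w z ∂ν ≤ ∫ z, w z ∂μ := by
  have := hm.fin
  set E := {z | z ∈ Ω ∧ r ≤ u z}
  have hE : MeasurableSet E := e.meas_ge r
  set K := {z | z ∈ Ω ∧ u z ≤ r}
  have hK : IsCompact K := e.Kle hr
  have hKΩ : K ⊆ Ω := fun z hz => hz.1
  obtain ⟨χ, hχ, hχ1, h01⟩ := cutoff hK e.op hKΩ
  set W : ℂ → ℝ := fun z => w z * χ z
  have hWc : Continuous W := Tst.cont_mul e.op hχ.cd.continuous hχ.ts hw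
  have hWs : HasCompactSupport W := hχ.cs.mul_left
  have hWt : tsupport W ⊆ Ω := tsupport_mul_subset_right.trans hχ.ts
  obtain ⟨O, hOo, hKO, hO1⟩ := mem_nhdsSet_iff_exists.1 hχ1
  obtain ⟨δ, hδ, hδO⟩ := hK.exists_thickening_subset_open (hOo.inter e.op)
    (subset_inter hKO hKΩ)
  obtain ⟨δ', hδ', hδ'Ω⟩ := hWs.isCompact.exists_cthickening_subset_open e.op hWt
  set νr := μ + ν.restrict E
  have hWint : ∀ (N : Measure ℂ) [IsFiniteMeasure N], Integrable W N := fun N _ =>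
    hWc.integrable_of_hasCompactSupport hWs
  have hWO : ∀ z ∈ O ∩ Ω, W z = w z := fun z hz => by
    have : χ z = 1 := hO1 hz.1
    simp [W, this]
  have hWLS : LS W (O ∩ Ω) :=
    LS_congr (hOo.inter e.op) (fun z hz => (hWO z hz).symm) (fun z hz => hLS z hz.2)
  have key : ∀ ε > 0, ε ≤ δ / 2 → ε ≤ δ' →
      0 ≤ (∫ z, W z ∂νr) - (∫ z, W z ∂ν) + ε * (νr.real univ + ν.real univ) := by
    intro ε hε h1 h2
    obtain ⟨k, hk, hks, hk0, hkt, hkV, hgs, hgt⟩ := mollify hWc hWs hε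
    set g := mol W k
    have hgc : ContDiff ℝ 2 g := mol_contDiff hWc hk hks
    have hgT : Tst Ω g := ⟨hgc, hgs, hgt.trans ((cthickening_mono h2 _).trans hδ'Ω)⟩
    have hlap : ∀ z ∈ K, 0 ≤ lap g z := by
      intro z hz
      apply lap_nonneg hgc
      filter_upwards [Ioo_mem_nhdsGT (show 0 < δ / 2 by linarith)] with ρ hρ
      apply mol_submean hWc hk.continuous hks hk0
      intro t ht
      have htn := mem_ball_zero_iff.1 (hkt (subset_tsupport k ht))
      have hball : closedBall (z - t) ρ ⊆ O ∩ Ω := by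
        intro y hy
        apply hδO
        rw [mem_thickening_iff]
        refine ⟨z, hz, ?_⟩
        calc dist y z ≤ dist y (z - t) + dist (z - t) z := dist_triangle _ _ _
          _ < δ / 2 + δ / 2 := by
            apply add_lt_add (lt_of_le_of_lt hy hρ.2)
            rw [dist_eq_norm]; simp; linarith
          _ = δ := by ring
      apply LS_mean hρ.1 hWc.continuousOn
      exact fun y hy => hWLS y (hball (ball_subset_closedBall hy))
    have hgi : ∀ (N : Measure ℂ) [IsFiniteMeasure N], Integrable g N := fun N _ =>
      hgc.continuous.integrable_of_hasCompactSupport hgs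
    have hdiff : 0 ≤ (∫ z, g z ∂νr) - ∫ z, g z ∂ν := by
      rw [hm.riesz.2 g hgT.cd hgT.cs hgT.ts, hν.2 g hgT.cd hgT.cs hgT.ts,
        setInt_lap hgT.ts, setInt_lap hgT.ts, ← mul_sub,
        ← integral_sub (hgT.int_lap e.op (e.maxr hr).cont) (hgT.int_lap e.op e.cont)]
      apply mul_nonneg (by norm_num)
      apply integral_nonneg
      intro z
      show 0 ≤ max (u z) r * lap g z - u z * lap g z
      rw [← sub_mul]
      by_cases hzt : z ∈ tsupport g
      · by_cases hzr : u z ≤ r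
        · exact mul_nonneg (sub_nonneg.2 (le_max_left _ _)) (hlap z ⟨hgT.ts hzt, hzr⟩)
        · rw [max_eq_left (le_of_not_ge hzr)]; simp
      · simp [lap_zero_off hzt]
    have happ : ∀ (N : Measure ℂ) [IsFiniteMeasure N], |(∫ z, g z ∂N) - ∫ z, W z ∂N| ≤
        ε * N.real univ := by
      intro N _
      rw [← integral_sub (hgi N) (hWint N), ← Real.norm_eq_abs]
      exact norm_integral_le_of_norm_le_const (Eventually.of_forall fun z => hkV z)
    have a1 := abs_le.1 (happ νr)
    have a2 := abs_le.1 (happ ν)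
    rw [mul_add]
    linarith [a1.1, a1.2, a2.1, a2.2]
  have hfinal : 0 ≤ (∫ z, W z ∂νr) - (∫ z, W z ∂ν) := by
    have hlim : Tendsto (fun ε : ℝ => (∫ z, W z ∂νr) - (∫ z, W z ∂ν) +
        ε * (νr.real univ + ν.real univ)) (𝓝[>] 0) (𝓝 ((∫ z, W z ∂νr) - (∫ z, W z ∂ν))) := by
      have : Continuous (fun ε : ℝ => (∫ z, W z ∂νr) - (∫ z, W z ∂ν) +
        ε * (νr.real univ + ν.real univ)) := by fun_prop
      have := this.tendsto 0
      simp only [zero_mul, add_zero] at this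
      exact this.mono_left nhdsWithin_le_nhds
    refine ge_of_tendsto hlim ?_
    filter_upwards [Ioc_mem_nhdsGT (show 0 < min (δ / 2) δ' by positivity)] with ε hε
    exact key ε hε.1 (hε.2.trans (min_le_left _ _)) (hε.2.trans (min_le_right _ _))
  have s1 : ∫ z, W z ∂νr = ∫ z, W z ∂μ + ∫ z in E, W z ∂ν :=
    integral_add_measure (hWint μ) (hWint _)
  have hBm : MeasurableSet {z | z ∈ Ω ∧ u z < r} :=
    (e.cont.isOpen_inter_preimage e.op isOpen_Iio).measurableSet
  have s2 : ∫ z, W z ∂ν = ∫ z in {z | z ∈ Ω ∧ u z < r}, W z ∂ν + ∫ z in E, W z ∂ν := by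
    rw [← setIntegral_union _ hE (hWint ν).integrableOn (hWint ν).integrableOn]
    · symm
      have : {z | z ∈ Ω ∧ u z < r} ∪ E = Ω := by
        ext z; constructor
        · rintro (h | h) <;> exact h.1
        · intro h
          rcases lt_or_ge (u z) r with h' | h'
          · exact Or.inl ⟨h, h'⟩
          · exact Or.inr ⟨h, h'⟩
      rw [this]
      apply setIntegral_eq_integral_of_forall_compl_eq_zero
      intro z hz
      exact image_eq_zero_of_notMem_tsupport (fun hc => hz (hWt hc))
    · rw [Set.disjoint_left]
      intro z h1 h2
      exact absurd h1.2 (not_lt.2 h2.2)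
  have s3 : ∫ z in {z | z ∈ Ω ∧ u z < r}, W z ∂ν = ∫ z in {z | z ∈ Ω ∧ u z < r}, w z ∂ν :=
    setIntegral_congr_fun hBm (fun z hz => hWO z ⟨hKO ⟨hz.1, hz.2.le⟩, hz.1⟩)
  have s4 : ∫ z, W z ∂μ = ∫ z, w z ∂μ := by
    apply integral_congr_ae
    have : ∀ᵐ z ∂μ, z ∈ {z | z ∈ Ω ∧ u z = r} := hm.supp
    filter_upwards [this] with z hz
    exact hWO z ⟨hKO ⟨hz.1, hz.2.le⟩, hz.1⟩
  rw [← s3, ← s4]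
  linarith

end

section

variable {u : ℂ → ℝ} {Ω U : Set ℂ} {ψ : ℂ → ℂ}

lemma Ex.exits (e : Ex u Ω) {K : Set ℂ} (hK : IsCompact K) (hKΩ : K ⊆ Ω) :
    ∀ᶠ r in 𝓝[<] (0:ℝ), ∀ z ∈ K, u z < r := by
  rcases K.eq_empty_or_nonempty with rfl | hne
  · simp
  obtain ⟨z0, hz0, hmax⟩ := hK.exists_isMaxOn hne (e.cont.mono hKΩ)
  filter_upwards [Ioo_mem_nhdsLT (e.neg z0 (hKΩ hz0))] with r hr z hz
  exact lt_of_le_of_lt (hmax hz) hr.1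

lemma Ex.harm_eq (e : Ex u Ω) {ν μ : Measure ℂ} [IsFiniteMeasure ν] (hν : IsRieszMeasure u Ω ν)
    {r : ℝ} (hr : r < 0) (hm : MAP u Ω ν r μ) {w : ℂ → ℝ} {G : ℂ → ℂ} (hG : DifferentiableOn ℂ G Ω)
    (hw : ∀ z ∈ Ω, (G z).re = w z) :
    ∫ z in {z | z ∈ Ω ∧ u z < r}, w z ∂ν = ∫ z, w z ∂μ := by
  have hc : ContinuousOn (fun z => (G z).re) Ω := Complex.continuous_re.comp_continuousOn hG.continuousOn
  have hc' : ContinuousOn w Ω := hc.congr (fun z hz => (hw z hz).symm)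
  have h1 : LS (fun z => (G z).re) Ω := fun z hz => (mean_re e.op hG hz).mono fun ρ h => h.ge
  have h2 : LS (fun z => ((-G) z).re) Ω := fun z hz => (mean_re e.op hG.neg hz).mono fun ρ h => h.ge
  have a := e.claimB hν hr hm hc' (LS_congr e.op hw h1)
  have b := e.claimB hν hr hm hc'.neg (LS_congr e.op (v := fun z => - w z) (fun z hz => by
    simp [hw z hz]) h2)
  rw [show (-w) = fun z => - w z from rfl, integral_neg, integral_neg] at b
  linarith

lemma CM.harm (c : CM Ω U ψ) {φ : ℂ → ℝ} (hφ : CircleIntegrable φ 0 1) :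
    ∃ G : ℂ → ℂ, DifferentiableOn ℂ G Ω ∧ ∀ z ∈ Ω, (G z).re = Pz 1 φ (tau ψ z) := by
  obtain ⟨G, hG, h⟩ := Pz_analytic hφ
  exact ⟨fun z => G (tau ψ z), hG.differentiableOn.comp c.tau_diff (fun z hz => c.tau_ball hz),
    fun z hz => h _ (c.tau_ball hz)⟩

lemma Ex.cover (e : Ex u Ω) {ν : Measure ℂ} (hν : IsRieszMeasure u Ω ν) :
    ∀ᵐ z ∂ν, z ∈ Ω := by
  exact hν.1

lemma Ex.lim_set (e : Ex u Ω) {ν : Measure ℂ} [IsFiniteMeasure ν] (hν : IsRieszMeasure u Ω ν)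
    {w : ℂ → ℝ} (hw : Integrable w ν) :
    Tendsto (fun r => ∫ z in {z | z ∈ Ω ∧ u z < r}, w z ∂ν) (𝓝[<] (0:ℝ)) (𝓝 (∫ z, w z ∂ν)) := by
  have hm : ∀ r, MeasurableSet {z | z ∈ Ω ∧ u z < r} := fun r =>
    (e.cont.isOpen_inter_preimage e.op isOpen_Iio).measurableSet
  have : ∀ r : ℝ, ∫ z in {z | z ∈ Ω ∧ u z < r}, w z ∂ν =
      ∫ z, ({z | z ∈ Ω ∧ u z < r}).indicator w z ∂ν := fun r => (integral_indicator (hm r)).symm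
  simp only [this]
  refine tendsto_integral_filter_of_dominated_convergence (fun z => ‖w z‖)
    (Eventually.of_forall fun r => hw.aestronglyMeasurable.indicator (hm r))
    (Eventually.of_forall fun r => Eventually.of_forall fun z => norm_indicator_le_norm_self _ _)
    hw.norm ?_
  filter_upwards [e.cover hν] with z hz
  apply tendsto_const_nhds.congr'
  filter_upwards [Ioo_mem_nhdsLT (e.neg z hz)] with r hr
  rw [indicator_of_mem]
  exact ⟨hz, hr.1⟩

lemma Ex.bdry (e : Ex u Ω) (c : CM Ω U ψ) {ν : Measure ℂ} [IsFiniteMeasure ν]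
    (hν : IsRieszMeasure u Ω ν) {μfam : ℝ → Measure ℂ}
    (hμ : ∀ r : ℝ, r < 0 → IsMAMeasure u Ω ν r (μfam r)) {μb : Measure ℂ}
    (hμb : IsBoundaryMA μfam μb) {φ : ℂ → ℝ} (hφ : Continuous φ) :
    Integrable (fun z => Pz 1 (fun ζ => φ (ψ ζ)) (tau ψ z)) ν ∧
    ∫ z, φ z ∂μb = ∫ z, Pz 1 (fun ζ => φ (ψ ζ)) (tau ψ z) ∂ν := by
  set φ' : ℂ → ℝ := fun ζ => φ (ψ ζ)
  have hφ' : ContinuousOn φ' (closedBall 0 1) := hφ.comp_continuousOn c.psi_contOn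
  have hP : ContinuousOn (Pext 1 φ') (closedBall 0 1) :=
    Pext_contOn one_pos sphere_subset_closedBall (hφ'.mono sdiff_subset)
  have hmt : MapsTo (tau ψ) (closure Ω) (closedBall 0 1) := fun z hz => c.tau_mem hz
  set H : ℂ → ℝ := fun z => Pext 1 φ' (tau ψ z)
  have hH : ContinuousOn H (closure Ω) := hP.comp c.tau_cont hmt
  have hHΩ : ∀ z ∈ Ω, H z = Pz 1 φ' (tau ψ z) := fun z hz => Pext_ball (c.tau_ball hz)
  have hclc : IsCompact (closure Ω) := by
    rw [c.closure_eq]; exact (isCompact_closedBall _ _).image_of_continuousOn c.psi_contOn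
  have hHint : Integrable H ν := by
    have h1 : IntegrableOn H Ω ν :=
      (hH.integrableOn_compact hclc).mono_set subset_closure
    rw [IntegrableOn, Measure.restrict_eq_self_of_ae_mem (e.cover hν)] at h1
    exact h1
  have hae : H =ᵐ[ν] fun z => Pz 1 φ' (tau ψ z) := by
    filter_upwards [e.cover hν] with z hz using hHΩ z hz
  refine ⟨hHint.congr hae, ?_⟩
  rw [← integral_congr_ae hae]
  have hci : CircleIntegrable φ' 0 1 :=
    ContinuousOn.circleIntegrable' (by rw [abs_one]; exact hφ'.mono sphere_subset_closedBall)
  obtain ⟨G, hG, hGre⟩ := c.harm hci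
  have hlim1 := e.lim_set hν hHint
  refine tendsto_nhds_unique (hμb φ hφ) ?_
  have hmass : ∀ r < 0, (μfam r).real univ ≤ ν.real univ := by
    intro r hr
    have hm := e.map hν hμ hr
    have := hm.fin
    have h1 := e.harm_eq hν hr hm (w := fun _ => 1) (G := fun _ => 1)
      (differentiableOn_const _) (fun z _ => by simp)
    simp at h1
    rw [← h1]
    exact measureReal_mono (subset_univ _)
  have hdiff : Tendsto (fun r => (∫ z, φ z ∂μfam r) - ∫ z in {z | z ∈ Ω ∧ u z < r}, H z ∂ν)
      (𝓝[<] 0) (𝓝 0) := by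
    rw [Metric.tendsto_nhds]
    intro ε hε
    set δ := ε / (ν.real univ + 1)
    have hν0 : 0 ≤ ν.real univ := measureReal_nonneg
    have hδ : 0 < δ := by positivity
    have hdc : ContinuousOn (fun z => φ z - H z) (closure Ω) := hφ.continuousOn.sub hH
    have hKc : IsCompact (closure Ω ∩ (fun z => φ z - H z) ⁻¹' {x | δ ≤ |x|}) :=
      hclc.of_isClosed_subset (hdc.preimage_isClosed_of_isClosed isClosed_closure
        (isClosed_le continuous_const continuous_abs)) inter_subset_left
    have hKΩ : closure Ω ∩ (fun z => φ z - H z) ⁻¹' {x | δ ≤ |x|} ⊆ Ω := by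
      rintro z ⟨hz, hzd⟩
      by_contra hc
      have hfz : z ∈ frontier Ω := ⟨hz, by rwa [e.op.interior_eq]⟩
      have hts := c.tau_sphere hfz
      have : H z = φ z := by
        show Pext 1 φ' (tau ψ z) = φ z
        rw [Pext_nball (by simp at hts; simp [hts])]
        show φ (ψ (tau ψ z)) = φ z
        rw [c.psi_tau hz]
      simp [this] at hzd
      linarith
    filter_upwards [e.exits hKc hKΩ, self_mem_nhdsWithin] with r hr hr0
    have hr0 : r < 0 := hr0
    have hm := e.map hν hμ hr0
    have := hm.fin
    have hsupp : ∀ᵐ z ∂μfam r, z ∈ {z | z ∈ Ω ∧ u z = r} := hm.supp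
    rw [e.harm_eq hν hr0 hm hG (fun z hz => (hGre z hz).trans (hHΩ z hz).symm)]
    have iφ : Integrable φ (μfam r) := by
      have h1 : IntegrableOn φ (closure Ω) (μfam r) := hφ.continuousOn.integrableOn_compact hclc
      rwa [IntegrableOn, Measure.restrict_eq_self_of_ae_mem
        (hsupp.mono fun z hz => subset_closure hz.1)] at h1
    have iH : Integrable H (μfam r) := by
      have h1 : IntegrableOn H (closure Ω) (μfam r) := hH.integrableOn_compact hclc
      rwa [IntegrableOn, Measure.restrict_eq_self_of_ae_mem
        (hsupp.mono fun z hz => subset_closure hz.1)] at h1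
    rw [← integral_sub iφ iH, dist_zero_right]
    have hb : ‖∫ z, φ z - H z ∂μfam r‖ ≤ δ * (μfam r).real univ := by
      apply norm_integral_le_of_norm_le_const
      filter_upwards [hsupp] with z hz
      by_contra hc
      have := hr z ⟨subset_closure hz.1, (not_le.1 hc).le⟩
      exact absurd hz.2 this.ne
    refine hb.trans_lt ?_
    calc δ * (μfam r).real univ ≤ δ * ν.real univ := by gcongr; exact hmass r hr0
      _ < δ * (ν.real univ + 1) := by gcongr; linarith
      _ = ε := by simp only [δ]; field_simp
  have := hdiff.add hlim1
  simpa using this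

lemma Ex.mub_fin (e : Ex u Ω) (c : CM Ω U ψ) {ν : Measure ℂ} [IsFiniteMeasure ν]
    (hν : IsRieszMeasure u Ω ν) {μfam : ℝ → Measure ℂ}
    (hμ : ∀ r : ℝ, r < 0 → IsMAMeasure u Ω ν r (μfam r)) {μb : Measure ℂ}
    (hμb : IsBoundaryMA μfam μb) : IsFiniteMeasure μb := by
  have h := (e.bdry c hν hμ hμb (φ := fun _ => 1) continuous_const).2
  have hP : ∀ z ∈ Ω, Pz 1 (fun _ => (1:ℝ)) (tau ψ z) = 1 := by
    intro z hz
    have := Pz_re (R := 1) (G := fun _ => 1) (differentiable_const _) (c.tau_ball hz)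
    simpa using this
  have h2 : ∫ z, Pz 1 (fun _ => (1:ℝ)) (tau ψ z) ∂ν = ∫ z, (1:ℝ) ∂ν := by
    apply integral_congr_ae
    filter_upwards [e.cover hν] with z hz using hP z hz
  rw [h2] at h
  simp at h
  have hne : ν ≠ 0 := by
    rintro rfl
    obtain ⟨φ, hφ, hn⟩ := e.nonharm
    have := hν.2 φ hφ.cd hφ.cs hφ.ts
    simp at this
    exact hn this
  constructor
  by_contra hc
  have : μb univ = ⊤ := not_lt_top_iff.1 hc
  rw [Measure.real, this, Measure.real, ENNReal.toReal_top] at h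
  have := (ENNReal.toReal_eq_zero_iff _).1 h.symm
  rcases this with h0 | h0
  · exact hne (Measure.measure_univ_eq_zero.1 h0)
  · exact measure_ne_top _ _ h0

/-- normalized angle measure -/
def mc : Measure ℝ := ENNReal.ofReal (2 * π)⁻¹ • volume.restrict (Ioc 0 (2 * π))

instance : IsProbabilityMeasure mc := by
  constructor
  rw [mc, Measure.smul_apply, Measure.restrict_apply_univ, Real.volume_Ioc, smul_eq_mul,
    ← ENNReal.ofReal_mul (by positivity), sub_zero, inv_mul_cancel₀ (by positivity),
    ENNReal.ofReal_one]

lemma mc_ae {P : ℝ → Prop} (h : ∀ᵐ θ ∂(volume.restrict (Ioc 0 (2 * π))), P θ) : ∀ᵐ θ ∂mc, P θ :=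
  Measure.ae_smul_measure h _

lemma avg_eq (φ : ℂ → ℝ) (R : ℝ) : Real.circleAverage φ 0 R = ∫ θ, φ (circleMap 0 R θ) ∂mc := by
  rw [Real.circleAverage_def, mc, integral_smul_measure,
    intervalIntegral.integral_of_le (by positivity), ENNReal.toReal_ofReal (by positivity)]

lemma ci_iff {φ : ℂ → ℝ} {R : ℝ} : CircleIntegrable φ 0 R ↔
    Integrable (fun θ => φ (circleMap 0 R θ)) mc := by
  rw [CircleIntegrable, intervalIntegrable_iff_integrableOn_Ioc_of_le (by positivity), IntegrableOn,
    mc, integrable_smul_measure (by simp [Real.pi_pos]) (by simp)]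

lemma Pz_eq (R : ℝ) (φ : ℂ → ℝ) (z : ℂ) :
    Pz R φ z = ∫ θ, poissonKernel 0 z (circleMap 0 R θ) * φ (circleMap 0 R θ) ∂mc := by
  rw [Pz, avg_eq]; rfl

/-- extended Poisson integral -/
def PL (Φ : ℝ → ℝ≥0∞) (z : ℂ) : ℝ≥0∞ :=
  ∫⁻ θ, ENNReal.ofReal (poissonKernel 0 z (circleMap 0 1 θ)) * Φ θ ∂mc

lemma PL_eq {φ : ℂ → ℝ} (hφ : CircleIntegrable φ 0 1) (h0 : ∀ ζ ∈ sphere (0:ℂ) 1, 0 ≤ φ ζ)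
    {z : ℂ} (hz : z ∈ ball (0:ℂ) 1) :
    PL (fun θ => ENNReal.ofReal (φ (circleMap 0 1 θ))) z = ENNReal.ofReal (Pz 1 φ z) := by
  have hs : ∀ θ, circleMap 0 1 θ ∈ sphere (0:ℂ) 1 := fun θ => circleMap_mem_sphere _ zero_le_one _
  have hk : ∀ θ, 0 ≤ poissonKernel 0 z (circleMap 0 1 θ) := fun θ =>
    pk_nonneg hz (by rw [abs_one]; exact hs θ)
  have hi : Integrable (fun θ => poissonKernel 0 z (circleMap 0 1 θ) * φ (circleMap 0 1 θ)) mc :=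
    ci_iff.1 (Pz_int hφ hz)
  rw [Pz_eq, PL, ofReal_integral_eq_lintegral_ofReal hi
    (Eventually.of_forall fun θ => mul_nonneg (hk θ) (h0 _ (hs θ)))]
  congr 1; ext θ
  rw [ENNReal.ofReal_mul (hk θ)]

lemma Ex.mub_lint (e : Ex u Ω) (c : CM Ω U ψ) {ν : Measure ℂ} [IsFiniteMeasure ν]
    (hν : IsRieszMeasure u Ω ν) {μfam : ℝ → Measure ℂ}
    (hμ : ∀ r : ℝ, r < 0 → IsMAMeasure u Ω ν r (μfam r)) {μb : Measure ℂ}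
    (hμb : IsBoundaryMA μfam μb) {Φ : ℂ → ℝ≥0∞} (hΦ : Measurable Φ) :
    ∫⁻ ξ, Φ ξ ∂μb = ∫⁻ z, PL (fun θ => Φ (ψ (circleMap 0 1 θ))) (tau ψ z) ∂ν := by
  classical
  have := e.mub_fin c hν hμ hμb
  set τ : ℂ → ℂ := Ω.piecewise (tau ψ) 0
  have hτ : Measurable τ := by
    apply ContinuousOn.measurable_piecewise (c.tau_cont.mono subset_closure)
      continuousOn_const e.op.measurableSet
  have hτΩ : ∀ z ∈ Ω, τ z = tau ψ z := fun z hz => piecewise_eq_of_mem _ _ _ hz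
  have hg : Continuous (fun θ => ψ (circleMap 0 1 θ)) :=
    c.psi_contOn.comp_continuous (continuous_circleMap 0 1) (fun θ => sphere_subset_closedBall
      (circleMap_mem_sphere _ zero_le_one _))
  set k : ℂ × ℝ → ℝ≥0∞ := fun q => ENNReal.ofReal (poissonKernel 0 (τ q.1) (circleMap 0 1 q.2))
  have hk : Measurable k := by
    apply ENNReal.measurable_ofReal.comp
    have h1 : Measurable (fun q : ℂ × ℝ => τ q.1) := hτ.comp measurable_fst
    have h2 : Measurable (fun q : ℂ × ℝ => circleMap 0 1 q.2) :=
      (continuous_circleMap 0 1).measurable.comp measurable_snd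
    simp only [poissonKernel_def]
    fun_prop
  set G : ℂ × ℝ → ℂ := fun q => ψ (circleMap 0 1 q.2)
  have hG : Measurable G := hg.measurable.comp measurable_snd
  set M : Measure ℂ := ((ν.prod mc).withDensity k).map G
  have hM : ∀ Φ : ℂ → ℝ≥0∞, Measurable Φ →
      ∫⁻ ξ, Φ ξ ∂M = ∫⁻ z, PL (fun θ => Φ (ψ (circleMap 0 1 θ))) (tau ψ z) ∂ν := by
    intro Φ hΦ
    rw [lintegral_map hΦ hG, show (fun a => Φ (G a)) = Φ ∘ G from rfl,
      lintegral_withDensity_eq_lintegral_mul _ hk (hΦ.comp hG),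
      lintegral_prod _ (hk.mul (hΦ.comp hG)).aemeasurable]
    apply lintegral_congr_ae
    filter_upwards [e.cover hν] with z hz
    simp only [PL, Pi.mul_apply, k, G, hτΩ z hz, Function.comp]
  suffices h : μb = M by rw [h]; exact hM Φ hΦ
  apply ext_of_forall_lintegral_eq_of_IsFiniteMeasure
  intro φ
  rw [hM _ (by fun_prop)]
  have hφc : Continuous (fun x => (φ x : ℝ)) := by fun_prop
  obtain ⟨h1, h2⟩ := e.bdry c hν hμ hμb hφc
  have hci : CircleIntegrable (fun ζ => (φ (ψ ζ) : ℝ)) 0 1 :=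
    ContinuousOn.circleIntegrable' (by
      rw [abs_one]
      exact hφc.comp_continuousOn (c.psi_contOn.mono sphere_subset_closedBall))
  have hint : Integrable (fun x => (φ x : ℝ)) μb := by
    obtain ⟨C, hC⟩ := φ.isBounded_range.subset_closedBall 0
    refine Integrable.of_bound hφc.aestronglyMeasurable C (Eventually.of_forall fun x => ?_)
    have := hC (mem_range_self x)
    simpa [NNReal.dist_eq] using this
  have hl : ∫⁻ x, (φ x : ℝ≥0∞) ∂μb = ENNReal.ofReal (∫ x, (φ x : ℝ) ∂μb) := by
    rw [ofReal_integral_eq_lintegral_ofReal hint (Eventually.of_forall fun x => (φ x).2)]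
    simp
  rw [hl, h2, ofReal_integral_eq_lintegral_ofReal h1]
  · apply lintegral_congr_ae
    filter_upwards [e.cover hν] with z hz
    rw [← PL_eq hci (fun ζ _ => (φ _).2) (c.tau_ball hz)]
    simp
  · filter_upwards [e.cover hν] with z hz
    have hz' := c.tau_ball hz
    have := Pz_mono (R := 1) (φ := fun _ => 0) (χ := fun ζ => (φ (ψ ζ) : ℝ))
      (by simp [CircleIntegrable]) hci (fun ζ _ => (φ _).2) hz'
    refine le_trans (le_of_eq ?_) this
    simp [Pz_eq]

lemma CM.ae_mub (c : CM Ω U ψ) {ν μb : Measure ℂ}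
    (h : ∀ Φ : ℂ → ℝ≥0∞, Measurable Φ →
      ∫⁻ ξ, Φ ξ ∂μb = ∫⁻ z, PL (fun θ => Φ (ψ (circleMap 0 1 θ))) (tau ψ z) ∂ν)
    {P : ℂ → Prop} (hP : ∀ᵐ ξ ∂(arcLen Ω), P ξ) : ∀ᵐ ξ ∂μb, P ξ := by
  obtain ⟨T, hT, hTm, hT0⟩ := exists_measurable_superset_of_null (ae_iff.1 hP)
  have h1 : ∀ᵐ ξ ∂(arcLen Ω), ξ ∉ T := by rw [ae_iff]; simpa using hT0
  have h2 := mc_ae (c.ae_circle h1)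
  have h3 : μb T = 0 := by
    rw [← lintegral_indicator_one hTm, h _ (measurable_one.indicator hTm)]
    have : ∀ z, PL (fun θ => T.indicator 1 (ψ (circleMap 0 1 θ))) (tau ψ z) = 0 := by
      intro z
      rw [PL]
      rw [← lintegral_zero (μ := mc)]
      apply lintegral_congr_ae
      filter_upwards [h2] with θ hθ
      simp [hθ]
    simp [this]
  rw [ae_iff]
  exact measure_mono_null hT h3

end

section

variable {Ω U : Set ℂ} {ψ : ℂ → ℂ}

lemma harm_at {h : ℂ → ℝ} (hΩ : IsOpen Ω) (hh : HarmonicOn h Ω) :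
    InnerProductSpace.HarmonicOnNhd h Ω := by
  have hcd : ∀ z ∈ Ω, ContDiffAt ℝ 2 h z := fun z hz => (hh.1 z hz).contDiffAt (hΩ.mem_nhds hz)
  intro z hz
  refine ⟨hcd z hz, ?_⟩
  filter_upwards [hΩ.mem_nhds hz] with y hy
  have hl := hh.2 y hy
  have hd : DifferentiableAt ℝ (fderiv ℝ h) y :=
    ((hcd y hy).fderiv_right (m := 1) (by norm_num)).differentiableAt (by norm_num)
  have hv : ∀ v : ℂ, fderiv ℝ (fun w => fderiv ℝ h w v) y = (fderiv ℝ (fderiv ℝ h) y).flip v := by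
    intro v
    have := hd.hasFDerivAt.clm_apply (hasFDerivAt_const v y)
    rw [this.fderiv]; ext; simp
  rw [lap, hv, hv] at hl
  simp only [InnerProductSpace.laplacian_eq_iteratedFDeriv_complexPlane, iteratedFDeriv_two_apply]
  simpa using hl

lemma CM.hardy_bound (c : CM Ω U ψ) {p : ℝ} {f : ℂ → ℂ} (hp : 0 < p) (hf : MemHClassical p Ω f) :
    ∃ C, ∀ s, 0 < s → s < 1 → Real.circleAverage (fun ζ => ‖f (ψ ζ)‖ ^ p) 0 s ≤ C := by
  obtain ⟨hfd, h, hh, hle⟩ := hf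
  have hH := harm_at c.isOpen hh
  refine ⟨h (ψ 0), fun s hs0 hs1 => ?_⟩
  have hsub : closedBall (0:ℂ) s ⊆ ball 0 1 := closedBall_subset_ball hs1
  have hψd : DifferentiableOn ℂ ψ (ball 0 1) := c.dif.mono (ball_subset_closedBall.trans c.sub)
  have hψc : ContinuousOn ψ (ball 0 1) := hψd.continuousOn
  have hψm : MapsTo ψ (ball 0 1) Ω := fun z hz => c.psi_ball hz
  have hhc : ContinuousOn (fun ζ => h (ψ ζ)) (ball 0 1) := hh.1.continuousOn.comp hψc hψm
  have hLS : LS (fun ζ => - h (ψ ζ)) (ball 0 1) := by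
    intro a ha
    obtain ⟨R, hR, hRΩ⟩ := Metric.isOpen_iff.1 c.isOpen _ (hψm ha)
    obtain ⟨G, hG, hGe⟩ := InnerProductSpace.HarmonicOnNhd.exists_analyticOnNhd_ball_re_eq
      (f := h) (z := ψ a) (R := R) (fun x hx => hH x (hRΩ hx))
    set V := ball (0:ℂ) 1 ∩ ψ ⁻¹' (ball (ψ a) R)
    have hV : IsOpen V := hψc.isOpen_inter_preimage isOpen_ball isOpen_ball
    have haV : a ∈ V := ⟨ha, mem_ball_self hR⟩
    have hd : DifferentiableOn ℂ (fun ζ => - G (ψ ζ)) V :=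
      (hG.differentiableOn.comp (hψd.mono inter_subset_left) (fun x hx => hx.2)).neg
    have hV' : LS (fun ζ => (- G (ψ ζ)).re) V := fun z hz =>
      (mean_re hV hd hz).mono fun ρ h => h.ge
    refine LS_congr (v := fun ζ => - h (ψ ζ)) hV (fun z hz => ?_) hV' a haV
    have := hGe hz.2
    simp only [neg_re]
    simp only at this
    rw [this]
  have h1 := LS_mean0 hs0 (hhc.neg.mono hsub) (fun z hz => hLS z (hsub (ball_subset_closedBall hz)))
  have h2 : Real.circleAverage (fun ζ => - h (ψ ζ)) 0 s = - Real.circleAverage (fun ζ => h (ψ ζ)) 0 s := by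
    simp only [avg_eq, integral_neg]
  have h1' : - h (ψ 0) ≤ Real.circleAverage (fun ζ => - h (ψ ζ)) 0 s := h1
  rw [h2] at h1'
  have hsp : sphere (0:ℂ) |s| ⊆ ball 0 1 := by
    rw [abs_of_pos hs0]; exact sphere_subset_closedBall.trans hsub
  have h3 : Real.circleAverage (fun ζ => ‖f (ψ ζ)‖ ^ p) 0 s ≤ Real.circleAverage (fun ζ => h (ψ ζ)) 0 s := by
    apply Real.circleAverage_mono
    · apply ContinuousOn.circleIntegrable'
      refine ContinuousOn.rpow_const ?_ (fun x _ => Or.inr hp.le)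
      exact ((hfd.continuousOn.comp hψc hψm).mono hsp).norm
    · exact ContinuousOn.circleIntegrable' (hhc.mono hsp)
    · intro x hx
      exact hle _ (hψm (hsp hx))
  linarith

/-- approximating radii -/
def sn (n : ℕ) : ℝ := 1 - 1 / ((n:ℝ) + 2)
lemma sn_pos (n : ℕ) : 0 < sn n := by
  have : 1 / ((n:ℝ) + 2) < 1 := by rw [div_lt_one (by positivity)]; linarith [n.cast_nonneg (α := ℝ)]
  simp only [sn]; linarith
lemma sn_lt (n : ℕ) : sn n < 1 := by
  have : 0 < 1 / ((n:ℝ) + 2) := by positivity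
  simp only [sn]; linarith
lemma sn_lim : Tendsto sn atTop (𝓝 1) := by
  have h : Tendsto (fun n : ℕ => 1 / ((n:ℝ) + 2)) atTop (𝓝 0) := by
    have := (tendsto_one_div_add_atTop_nhds_zero_nat (𝕜 := ℝ)).comp (tendsto_add_atTop_nat 1)
    refine this.congr fun n => ?_
    simp; ring
  have := h.const_sub 1
  rw [sub_zero] at this
  exact this
lemma sn_lim' : Tendsto sn atTop (𝓝[<] 1) :=
  tendsto_nhdsWithin_iff.2 ⟨sn_lim, Eventually.of_forall sn_lt⟩

/-- data of a Hardy function on the disc with radial limits -/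
structure HD (F Fs : ℂ → ℂ) (p C : ℝ) : Prop where
  p0 : 0 < p
  dif : DifferentiableOn ℂ F (ball 0 1)
  bd : ∀ s, 0 < s → s < 1 → Real.circleAverage (fun ζ => ‖F ζ‖ ^ p) 0 s ≤ C
  rad : ∀ᵐ θ ∂mc, Tendsto (fun s : ℝ => F (s * circleMap 0 1 θ)) (𝓝[<] 1) (𝓝 (Fs (circleMap 0 1 θ)))

lemma cm_eq (s θ : ℝ) : circleMap 0 s θ = s * circleMap 0 1 θ := by simp [circleMap]

variable {F Fs : ℂ → ℂ} {p C : ℝ}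

lemma HD.cont (h : HD F Fs p C) {q : ℝ} (hq : 0 < q) (n : ℕ) :
    Continuous (fun θ => ‖F (circleMap 0 (sn n) θ)‖ ^ q) := by
  refine Continuous.rpow_const ?_ (fun x => Or.inr hq.le)
  apply Continuous.norm
  refine h.dif.continuousOn.comp_continuous (continuous_circleMap _ _) (fun θ => ?_)
  simp [abs_of_pos (sn_pos n), sn_lt n]

lemma HD.cont' (h : HD F Fs p C) {q : ℝ} (hq : 0 < q) :
    ContinuousOn (fun z => ‖F z‖ ^ q) (ball 0 1) :=
  h.dif.continuousOn.norm.rpow_const (fun x _ => Or.inr hq.le)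

lemma HD.lim (h : HD F Fs p C) {q : ℝ} (hq : 0 < q) : ∀ᵐ θ ∂mc,
    Tendsto (fun n => ‖F (circleMap 0 (sn n) θ)‖ ^ q) atTop (𝓝 (‖Fs (circleMap 0 1 θ)‖ ^ q)) := by
  filter_upwards [h.rad] with θ hθ
  have h1 := hθ.comp sn_lim'
  have h2 := (h1.norm).rpow_const (p := q) (Or.inr hq.le)
  refine h2.congr fun n => ?_
  simp only [Function.comp, cm_eq (sn n)]

lemma HD.meas (h : HD F Fs p C) {q : ℝ} (hq : 0 < q) :
    AEStronglyMeasurable (fun θ => ‖Fs (circleMap 0 1 θ)‖ ^ q) mc :=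
  aestronglyMeasurable_of_tendsto_ae atTop (fun n => (h.cont hq n).aestronglyMeasurable) (h.lim hq)

lemma mc_int {g : ℝ → ℝ} (hg : Continuous g) : Integrable g mc := by
  have : IntegrableOn g (Ioc 0 (2 * π)) volume := hg.integrableOn_Ioc
  exact Integrable.smul_measure this (by simp)

lemma HD.int (h : HD F Fs p C) : CircleIntegrable (fun ζ => ‖Fs ζ‖ ^ p) 0 1 := by
  rw [ci_iff]
  refine ⟨h.meas h.p0, ?_⟩
  rw [hasFiniteIntegral_iff_ofReal (Eventually.of_forall fun θ => by positivity)]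
  refine lt_of_le_of_lt ?_ (ENNReal.ofReal_lt_top (r := C))
  calc ∫⁻ θ, ENNReal.ofReal (‖Fs (circleMap 0 1 θ)‖ ^ p) ∂mc
      = ∫⁻ θ, liminf (fun n => ENNReal.ofReal (‖F (circleMap 0 (sn n) θ)‖ ^ p)) atTop ∂mc := by
        apply lintegral_congr_ae
        filter_upwards [h.lim h.p0] with θ hθ
        exact ((ENNReal.tendsto_ofReal hθ).liminf_eq).symm
    _ ≤ liminf (fun n => ∫⁻ θ, ENNReal.ofReal (‖F (circleMap 0 (sn n) θ)‖ ^ p) ∂mc) atTop :=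
        lintegral_liminf_le' (fun n => (h.cont h.p0 n).measurable.ennreal_ofReal.aemeasurable)
    _ ≤ _ := by
        refine liminf_le_of_le (by isBoundedDefault) (fun b hb => ?_)
        obtain ⟨n, hn⟩ := hb.exists
        refine hn.trans ?_
        rw [← ofReal_integral_eq_lintegral_ofReal (mc_int (h.cont h.p0 n))
          (Eventually.of_forall fun θ => by positivity)]
        apply ENNReal.ofReal_le_ofReal
        have := h.bd _ (sn_pos n) (sn_lt n)
        rwa [avg_eq] at this

lemma pk_lim {z : ℂ} (hz : z ∈ ball (0:ℂ) 1) (θ : ℝ) :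
    Tendsto (fun n => poissonKernel 0 z (circleMap 0 (sn n) θ)) atTop
      (𝓝 (poissonKernel 0 z (circleMap 0 1 θ))) := by
  have h1 : Tendsto (fun n => circleMap 0 (sn n) θ) atTop (𝓝 (circleMap 0 1 θ)) := by
    have : Continuous (fun s : ℝ => circleMap 0 s θ) := by unfold circleMap; fun_prop
    exact (this.tendsto 1).comp sn_lim
  have hne : circleMap 0 1 θ - z ≠ 0 := by
    intro h0
    have := sub_eq_zero.1 h0
    rw [← this] at hz
    simp at hz
  simp only [poissonKernel_def, sub_zero]
  refine Tendsto.div ((h1.norm.pow 2).sub tendsto_const_nhds) ((h1.sub tendsto_const_nhds).norm.pow 2) ?_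
  exact pow_ne_zero _ (norm_ne_zero_iff.2 hne)

lemma pk_bd {z : ℂ} {s : ℝ} (hs : (1 + ‖z‖) / 2 ≤ s) (hs1 : s < 1) (θ : ℝ) :
    poissonKernel 0 z (circleMap 0 s θ) ≤ 4 / (1 - ‖z‖) := by
  have hz0 := norm_nonneg z
  have hz1 : ‖z‖ < 1 := by linarith
  have hsz : ‖z‖ < s := by linarith
  have hn : ‖circleMap 0 s θ‖ = s := by simp; linarith
  simp only [poissonKernel_def, sub_zero]
  have h1 : s - ‖z‖ ≤ ‖circleMap 0 s θ - z‖ := by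
    have := norm_sub_norm_le (circleMap 0 s θ) z
    rwa [hn] at this
  have h2 : (s - ‖z‖) ^ 2 ≤ ‖circleMap 0 s θ - z‖ ^ 2 := by
    apply pow_le_pow_left₀ (by linarith) h1
  rw [hn]
  calc (s ^ 2 - ‖z‖ ^ 2) / ‖circleMap 0 s θ - z‖ ^ 2 ≤ (s ^ 2 - ‖z‖ ^ 2) / (s - ‖z‖) ^ 2 := by
        apply div_le_div_of_nonneg_left _ _ h2
        · nlinarith
        · have : 0 < s - ‖z‖ := by linarith
          positivity
    _ = (s + ‖z‖) / (s - ‖z‖) := by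
        have : s - ‖z‖ ≠ 0 := by linarith
        field_simp
        ring
    _ ≤ 4 / (1 - ‖z‖) := by
        rw [div_le_div_iff₀ (by linarith) (by linarith)]
        nlinarith

lemma pk_circ {z : ℂ} {R : ℝ} (hz : z ∈ ball (0:ℂ) R) :
    Continuous (fun θ => poissonKernel 0 z (circleMap 0 R θ)) := by
  refine (pk_cont hz).comp_continuous (continuous_circleMap _ _) (fun θ => circleMap_mem_sphere' _ _ _)

lemma pk_nn {z : ℂ} {R : ℝ} (hz : z ∈ ball (0:ℂ) R) (θ : ℝ) :
    0 ≤ poissonKernel 0 z (circleMap 0 R θ) := pk_nonneg hz (circleMap_mem_sphere' _ _ _)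

lemma pk_one {z : ℂ} {R : ℝ} (hz : z ∈ ball (0:ℂ) R) :
    ∫ θ, poissonKernel 0 z (circleMap 0 R θ) ∂mc = 1 := by
  have := Pz_re (R := R) (G := fun _ => 1) (differentiable_const _) hz
  rw [Pz_eq] at this
  simpa using this

lemma HD.half (h : HD F Fs p C) {z : ℂ} (hz : z ∈ ball (0:ℂ) 1) :
    ‖F z‖ ^ (p / 2) ≤ Pz 1 (fun ζ => ‖Fs ζ‖ ^ (p / 2)) z := by
  have hz1 : ‖z‖ < 1 := by simpa using hz
  have hp2 : 0 < p / 2 := half_pos h.p0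
  have hsq : ∀ x : ℝ, 0 ≤ x → (x ^ (p / 2)) ^ 2 = x ^ p := fun x hx => by
    rw [← Real.rpow_natCast, ← Real.rpow_mul hx]; congr 1; push_cast; ring
  set A := 4 / (1 - ‖z‖)
  have hA : 0 < A := by have : 0 < 1 - ‖z‖ := by linarith
                        positivity
  have hC : 0 ≤ C := by
    refine le_trans ?_ (h.bd (1/2) (by norm_num) (by norm_num))
    rw [avg_eq]; exact integral_nonneg fun θ => by positivity
  set b : ℝ → ℝ := fun θ => ‖Fs (circleMap 0 1 θ)‖ ^ (p / 2)
  set a : ℕ → ℝ → ℝ := fun n θ => ‖F (circleMap 0 (sn n) θ)‖ ^ (p / 2)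
  set k : ℝ → ℝ := fun θ => poissonKernel 0 z (circleMap 0 1 θ)
  set kn : ℕ → ℝ → ℝ := fun n θ => poissonKernel 0 z (circleMap 0 (sn n) θ)
  have hk0 : ∀ θ, 0 ≤ k θ := pk_nn hz
  have hb0 : ∀ θ, 0 ≤ b θ := fun θ => by positivity
  have ha0 : ∀ n θ, 0 ≤ a n θ := fun n θ => by positivity
  have hbint : Integrable b mc := by
    have h2 : Integrable (fun θ => ‖Fs (circleMap 0 1 θ)‖ ^ p) mc := ci_iff.1 h.int
    refine ((integrable_const (1:ℝ)).add h2).mono (h.meas hp2) (Eventually.of_forall fun θ => ?_)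
    have e2 := hsq ‖Fs (circleMap 0 1 θ)‖ (norm_nonneg _)
    rw [Real.norm_of_nonneg (hb0 θ), Pi.add_apply, Real.norm_of_nonneg (by positivity), ← e2]
    nlinarith [sq_nonneg (b θ - 1), hb0 θ]
  have hkb : Integrable (fun θ => k θ * b θ) mc :=
    ci_iff.1 (Pz_int (φ := fun ζ => ‖Fs ζ‖ ^ (p / 2)) (ci_iff.2 hbint) hz)
  have hev : ∀ᶠ n in atTop, (1 + ‖z‖) / 2 ≤ sn n :=
    sn_lim.eventually_const_le (by linarith)
  have key : ∀ N : ℝ, 0 < N → ‖F z‖ ^ (p / 2) ≤ (∫ θ, k θ * b θ ∂mc) + A * C / N := by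
    intro N hN
    have hlim : Tendsto (fun n => (∫ θ, kn n θ * min (a n θ) N ∂mc) + A * C / N) atTop
        (𝓝 ((∫ θ, k θ * min (b θ) N ∂mc) + A * C / N)) := by
      apply Tendsto.add_const
      refine tendsto_integral_filter_of_dominated_convergence (fun _ => A * N) ?_ ?_
        (integrable_const _) ?_
      · filter_upwards [hev] with n hn
        have hzn : z ∈ ball (0:ℂ) (sn n) := by simp; linarith
        exact ((pk_circ hzn).mul ((h.cont hp2 n).min continuous_const)).aestronglyMeasurable
      · filter_upwards [hev] with n hn
        have hzn : z ∈ ball (0:ℂ) (sn n) := by simp; linarith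
        refine Eventually.of_forall fun θ => ?_
        have h1 : 0 ≤ kn n θ := pk_nn hzn θ
        have h2 : kn n θ ≤ A := pk_bd hn (sn_lt n) θ
        have h3 : 0 ≤ min (a n θ) N := le_min (ha0 n θ) hN.le
        rw [Real.norm_of_nonneg (mul_nonneg h1 h3)]
        exact mul_le_mul h2 (min_le_right _ _) h3 hA.le
      · filter_upwards [h.lim hp2] with θ hθ
        exact (pk_lim hz θ).mul (hθ.min tendsto_const_nhds)
    have hge : ‖F z‖ ^ (p / 2) ≤ (∫ θ, k θ * min (b θ) N ∂mc) + A * C / N := by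
      refine ge_of_tendsto hlim ?_
      filter_upwards [hev] with n hn
      have hzn : z ∈ ball (0:ℂ) (sn n) := by simp; linarith
      have hsub : closedBall (0:ℂ) (sn n) ⊆ ball 0 1 := closedBall_subset_ball (sn_lt n)
      have h1 := LS_le_Pz (w := fun z => ‖F z‖ ^ (p / 2)) (sn_pos n) ((h.cont' hp2).mono hsub)
        (fun y hy => pow_LS isOpen_ball h.dif hp2 y (hsub (ball_subset_closedBall hy))) hzn
      rw [Pz_eq] at h1
      refine h1.trans ?_
      have hknc : Continuous (kn n) := pk_circ hzn
      have hac : Continuous (a n) := h.cont hp2 n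
      have h2 : ∫ θ, kn n θ * a n θ ∂mc ≤ ∫ θ, (kn n θ * min (a n θ) N + A / N * (a n θ) ^ 2) ∂mc := by
        apply integral_mono (mc_int (by fun_prop)) (mc_int (by fun_prop))
        intro θ
        have e1 : 0 ≤ kn n θ := pk_nn hzn θ
        have e2 : kn n θ ≤ A := pk_bd hn (sn_lt n) θ
        have e3 : a n θ ≤ min (a n θ) N + (a n θ) ^ 2 / N := by
          rcases le_total (a n θ) N with h' | h'
          · rw [min_eq_left h']
            have : 0 ≤ (a n θ) ^ 2 / N := by positivity
            linarith
          · rw [min_eq_right h']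
            have : a n θ ≤ (a n θ) ^ 2 / N := by
              rw [le_div_iff₀ hN]; nlinarith [ha0 n θ]
            linarith
        calc kn n θ * a n θ ≤ kn n θ * (min (a n θ) N + (a n θ) ^ 2 / N) := by gcongr
          _ = kn n θ * min (a n θ) N + kn n θ * ((a n θ) ^ 2 / N) := by ring
          _ ≤ kn n θ * min (a n θ) N + A * ((a n θ) ^ 2 / N) := by gcongr
          _ = _ := by ring
      refine h2.trans ?_
      rw [integral_add (mc_int (by fun_prop)) (mc_int (by fun_prop)), integral_const_mul]
      gcongr
      have h3 : ∫ θ, (a n θ) ^ 2 ∂mc ≤ C := by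
        have := h.bd _ (sn_pos n) (sn_lt n)
        rw [avg_eq] at this
        refine le_trans (le_of_eq ?_) this
        congr 1; ext θ; exact hsq _ (norm_nonneg _)
      calc A / N * ∫ θ, (a n θ) ^ 2 ∂mc ≤ A / N * C := by gcongr
        _ = _ := by ring
    refine hge.trans ?_
    gcongr ?_ + _
    apply integral_mono_of_nonneg _ hkb _
    · exact Eventually.of_forall fun θ => mul_nonneg (hk0 θ) (le_min (hb0 θ) hN.le)
    · exact Eventually.of_forall fun θ => mul_le_mul_of_nonneg_left (min_le_left _ _) (hk0 θ)
  rw [Pz_eq]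
  have hlim : Tendsto (fun N : ℝ => (∫ θ, k θ * b θ ∂mc) + A * C / N) atTop
      (𝓝 ((∫ θ, k θ * b θ ∂mc) + 0)) :=
    tendsto_const_nhds.add (tendsto_const_nhds.div_atTop tendsto_id)
  rw [add_zero] at hlim
  refine ge_of_tendsto hlim ?_
  filter_upwards [eventually_gt_atTop 0] with N hN using key N hN

lemma HD.maj (h : HD F Fs p C) {z : ℂ} (hz : z ∈ ball (0:ℂ) 1) :
    ‖F z‖ ^ p ≤ Pz 1 (fun ζ => ‖Fs ζ‖ ^ p) z := by
  have hp2 : 0 < p / 2 := half_pos h.p0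
  have hsq : ∀ x : ℝ, 0 ≤ x → (x ^ (p / 2)) ^ 2 = x ^ p := fun x hx => by
    rw [← Real.rpow_natCast, ← Real.rpow_mul hx]; congr 1; push_cast; ring
  have h1 := h.half hz
  rw [Pz_eq] at h1 ⊢
  set k : ℝ → ℝ := fun θ => poissonKernel 0 z (circleMap 0 1 θ)
  have hk0 : ∀ θ, 0 ≤ k θ := pk_nn hz
  set b : ℝ → ℝ := fun θ => ‖Fs (circleMap 0 1 θ)‖ ^ (p / 2)
  have hb0 : ∀ θ, 0 ≤ b θ := fun θ => by positivity
  have h2 : Integrable (fun θ => ‖Fs (circleMap 0 1 θ)‖ ^ p) mc := ci_iff.1 h.int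
  have hbint : Integrable b mc := by
    refine ((integrable_const (1:ℝ)).add h2).mono (h.meas hp2) (Eventually.of_forall fun θ => ?_)
    have e2 := hsq ‖Fs (circleMap 0 1 θ)‖ (norm_nonneg _)
    rw [Real.norm_of_nonneg (hb0 θ), Pi.add_apply, Real.norm_of_nonneg (by positivity), ← e2]
    nlinarith [sq_nonneg (b θ - 1), hb0 θ]
  have hkb : Integrable (fun θ => k θ * b θ) mc :=
    ci_iff.1 (Pz_int (φ := fun ζ => ‖Fs ζ‖ ^ (p / 2)) (ci_iff.2 hbint) hz)
  have hkb2 : Integrable (fun θ => k θ * ‖Fs (circleMap 0 1 θ)‖ ^ p) mc :=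
    ci_iff.1 (Pz_int h.int hz)
  have hk : Integrable k mc := mc_int (pk_circ hz)
  set t := ‖F z‖ ^ (p / 2)
  have ht : 0 ≤ t := by positivity
  have hnn : 0 ≤ ∫ θ, (k θ * ‖Fs (circleMap 0 1 θ)‖ ^ p - (2 * t) * (k θ * b θ) + t ^ 2 * k θ) ∂mc := by
    apply integral_nonneg
    intro θ
    show 0 ≤ k θ * ‖Fs (circleMap 0 1 θ)‖ ^ p - (2 * t) * (k θ * b θ) + t ^ 2 * k θ
    rw [← hsq _ (norm_nonneg _)]
    have : k θ * b θ ^ 2 - (2 * t) * (k θ * b θ) + t ^ 2 * k θ = k θ * (b θ - t) ^ 2 := by ring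
    rw [this]
    exact mul_nonneg (hk0 θ) (sq_nonneg _)
  have hi1 : Integrable (fun θ => k θ * ‖Fs (circleMap 0 1 θ)‖ ^ p - (2 * t) * (k θ * b θ)) mc :=
    hkb2.sub (hkb.const_mul _)
  rw [integral_add hi1 (hk.const_mul _),
    integral_sub hkb2 (hkb.const_mul _), integral_const_mul, integral_const_mul, pk_one hz] at hnn
  rw [← hsq _ (norm_nonneg (F z))]
  have h3 : t ≤ ∫ θ, k θ * b θ ∂mc := h1
  nlinarith

lemma HD.fatou (h : HD F Fs p C) {z : ℂ} (hz : z ∈ ball (0:ℂ) 1) :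
    PL (fun θ => ENNReal.ofReal (‖Fs (circleMap 0 1 θ)‖ ^ p)) z ≤
      liminf (fun n => ENNReal.ofReal (Pext (sn n) (fun ζ => ‖F ζ‖ ^ p) z)) atTop := by
  have hz1 : ‖z‖ < 1 := by simpa using hz
  have hev : ∀ᶠ n in atTop, ‖z‖ < sn n := sn_lim.eventually_const_lt hz1
  obtain ⟨n0, hn0⟩ := eventually_atTop.1 hev
  have hm : ∀ n, z ∈ ball (0:ℂ) (sn (n + n0)) := fun n => by
    simpa using hn0 (n + n0) (by omega)
  set Q : ℕ → ℝ → ℝ := fun n θ =>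
    poissonKernel 0 z (circleMap 0 (sn (n + n0)) θ) * ‖F (circleMap 0 (sn (n + n0)) θ)‖ ^ p
  have hQc : ∀ n, Continuous (Q n) := fun n => (pk_circ (hm n)).mul (h.cont h.p0 _)
  rw [← liminf_nat_add _ n0]
  calc PL (fun θ => ENNReal.ofReal (‖Fs (circleMap 0 1 θ)‖ ^ p)) z
      = ∫⁻ θ, liminf (fun n => ENNReal.ofReal (Q n θ)) atTop ∂mc := by
        rw [PL]
        apply lintegral_congr_ae
        filter_upwards [h.lim h.p0] with θ hθ
        have := (((pk_lim hz θ).mul hθ).comp (tendsto_add_atTop_nat n0))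
        rw [← ENNReal.ofReal_mul (pk_nn hz θ)]
        exact ((ENNReal.tendsto_ofReal this).liminf_eq).symm
    _ ≤ liminf (fun n => ∫⁻ θ, ENNReal.ofReal (Q n θ) ∂mc) atTop :=
        lintegral_liminf_le (fun n => (hQc n).measurable.ennreal_ofReal)
    _ = _ := by
        congr 1; ext n
        rw [Pext_ball (hm n), Pz_eq, ofReal_integral_eq_lintegral_ofReal (mc_int (hQc n))
          (Eventually.of_forall fun θ => mul_nonneg (pk_nn (hm n) θ) (by positivity))]

end

section

variable {u : ℂ → ℝ} {Ω U : Set ℂ} {ψ : ℂ → ℂ} {f fstar : ℂ → ℂ} {p C : ℝ}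

lemma CM.hd (c : CM Ω U ψ) (hp : 0 < p) (hf : MemHClassical p Ω f)
    (hfs : ∀ᵐ ξ ∂(arcLen Ω), NTLim Ω f ξ (fstar ξ)) :
    ∃ C, HD (fun ζ => f (ψ ζ)) (fun ζ => fstar (ψ ζ)) p C := by
  obtain ⟨C, hC⟩ := c.hardy_bound hp hf
  refine ⟨C, hp, ?_, hC, ?_⟩
  · exact hf.1.comp (c.dif.mono (ball_subset_closedBall.trans c.sub)) (fun z hz => c.psi_ball hz)
  · filter_upwards [mc_ae (c.ae_circle hfs)] with θ hθ
    exact c.radial (circleMap_mem_sphere _ zero_le_one _) hθ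

lemma CM.mub_eq (c : CM Ω U ψ) (hp : 0 < p) (hf : DifferentiableOn ℂ f Ω)
    (hfs : ∀ᵐ ξ ∂(arcLen Ω), NTLim Ω f ξ (fstar ξ)) {ν μb : Measure ℂ}
    (h : ∀ Φ : ℂ → ℝ≥0∞, Measurable Φ →
      ∫⁻ ξ, Φ ξ ∂μb = ∫⁻ z, PL (fun θ => Φ (ψ (circleMap 0 1 θ))) (tau ψ z) ∂ν) :
    ∫⁻ ξ, ENNReal.ofReal (‖fstar ξ‖ ^ p) ∂μb =
      ∫⁻ z, PL (fun θ => ENNReal.ofReal (‖fstar (ψ (circleMap 0 1 θ))‖ ^ p)) (tau ψ z) ∂ν := by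
  classical
  have hFr : IsClosed (frontier Ω) := isClosed_frontier
  have hfs' : ∀ᵐ ξ ∂(arcLen Ω), NTLim Ω f ξ (fstar ξ) ∧ ξ ∈ frontier Ω :=
    hfs.and (ae_restrict_mem hFr.measurableSet)
  set fn : ℕ → ℂ → ℂ := fun n => (frontier Ω).piecewise (fun ξ => f (ψ (sn n * tau ψ ξ))) 0
  have hmem : ∀ n, ∀ ξ ∈ frontier Ω, (sn n : ℂ) * tau ψ ξ ∈ ball (0:ℂ) 1 := by
    intro n ξ hξ
    have := c.tau_sphere hξ
    simp at this
    simp [this, abs_of_pos (sn_pos n), sn_lt n]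
  have hfn : ∀ n, Measurable (fn n) := by
    intro n
    apply ContinuousOn.measurable_piecewise _ continuousOn_const hFr.measurableSet
    refine hf.continuousOn.comp (t := Ω) ?_ (fun ξ hξ => c.psi_ball (hmem n ξ hξ))
    refine c.psi_contOn.comp (t := closedBall 0 1) ?_
      (fun ξ hξ => ball_subset_closedBall (hmem n ξ hξ))
    exact continuousOn_const.mul (c.tau_cont.mono frontier_subset_closure)
  set Φ : ℂ → ℝ≥0∞ := fun ξ => liminf (fun n => ENNReal.ofReal (‖fn n ξ‖ ^ p)) atTop
  have hΦ : Measurable Φ := Measurable.liminf fun n =>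
    ((hfn n).norm.pow_const p).ennreal_ofReal
  have heq : ∀ ξ, NTLim Ω f ξ (fstar ξ) ∧ ξ ∈ frontier Ω →
      Φ ξ = ENNReal.ofReal (‖fstar ξ‖ ^ p) := by
    rintro ξ ⟨h1, h2⟩
    have h3 := c.radial (f := f) (L := fstar ξ) (c.tau_sphere h2)
      (by rwa [c.psi_tau (frontier_subset_closure h2)])
    have h4 := ((h3.comp sn_lim').norm).rpow_const (p := p) (Or.inr hp.le)
    have h5 := (ENNReal.tendsto_ofReal h4).liminf_eq
    rw [← h5]
    simp only [Φ, fn, Function.comp, piecewise_eq_of_mem _ _ _ h2]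
  have e1 : ∫⁻ ξ, ENNReal.ofReal (‖fstar ξ‖ ^ p) ∂μb = ∫⁻ ξ, Φ ξ ∂μb := by
    apply lintegral_congr_ae
    filter_upwards [c.ae_mub h hfs'] with ξ hξ using (heq ξ hξ).symm
  rw [e1, h Φ hΦ]
  congr 1; ext z
  simp only [PL]
  apply lintegral_congr_ae
  filter_upwards [mc_ae (c.ae_circle hfs')] with θ hθ
  rw [heq _ hθ]

/-- Poisson modification. -/
def Wn (ψ f : ℂ → ℂ) (p s : ℝ) (z : ℂ) : ℝ := Pext s (fun ζ => ‖f (ψ ζ)‖ ^ p) (tau ψ z)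

lemma Fp_cont (c : CM Ω U ψ) (hp : 0 < p) (hf : DifferentiableOn ℂ f Ω) : ContinuousOn (fun ζ => ‖f (ψ ζ)‖ ^ p) (ball 0 1) := by
  refine ContinuousOn.rpow_const ?_ (fun x _ => Or.inr hp.le)
  exact (hf.continuousOn.comp (c.psi_contOn.mono ball_subset_closedBall)
    (fun z hz => c.psi_ball hz)).norm

lemma Wn_cont (c : CM Ω U ψ) (hp : 0 < p) (hf : DifferentiableOn ℂ f Ω) {s : ℝ} (hs0 : 0 < s)
    (hs1 : s < 1) : ContinuousOn (Wn ψ f p s) Ω := by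
  have h := Fp_cont c hp hf
  have hP : ContinuousOn (Pext s (fun ζ => ‖f (ψ ζ)‖ ^ p)) (ball 0 1) :=
    Pext_contOn hs0 (sphere_subset_closedBall.trans (closedBall_subset_ball hs1))
      (h.mono sdiff_subset)
  exact hP.comp (c.tau_cont.mono subset_closure) (fun z hz => c.tau_ball hz)

lemma Wn_ge (c : CM Ω U ψ) (hp : 0 < p) (hf : DifferentiableOn ℂ f Ω) {s : ℝ} (hs0 : 0 < s)
    (hs1 : s < 1) : ∀ z ∈ Ω, ‖f z‖ ^ p ≤ Wn ψ f p s z := by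
  intro z hz
  have hpt := c.psi_tau (subset_closure hz)
  by_cases hb : tau ψ z ∈ ball (0:ℂ) s
  · have hsub := closedBall_subset_ball (x := (0:ℂ)) hs1
    have h1 := LS_le_Pz hs0 ((Fp_cont c hp hf).mono hsub) (fun y hy =>
      pow_LS isOpen_ball (hf.comp (c.dif.mono (ball_subset_closedBall.trans c.sub))
        (fun z hz => c.psi_ball hz)) hp y (hsub (ball_subset_closedBall hy))) hb
    rw [Wn, Pext_ball hb]
    simpa [hpt] using h1
  · rw [Wn, Pext_nball hb, hpt]

lemma Wn_LS (c : CM Ω U ψ) (hp : 0 < p) (hf : DifferentiableOn ℂ f Ω) {s : ℝ} (hs0 : 0 < s)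
    (hs1 : s < 1) : LS (Wn ψ f p s) Ω := by
  intro z hz
  by_cases hb : tau ψ z ∈ ball (0:ℂ) s
  · have hci : CircleIntegrable (fun ζ => ‖f (ψ ζ)‖ ^ p) 0 s :=
      ContinuousOn.circleIntegrable' (by
        rw [abs_of_pos hs0]
        exact (Fp_cont c hp hf).mono
          (sphere_subset_closedBall.trans (closedBall_subset_ball hs1)))
    obtain ⟨G, hG, hGe⟩ := Pz_analytic hci
    set V := Ω ∩ tau ψ ⁻¹' (ball 0 s)
    have hV : IsOpen V :=
      (c.tau_cont.mono subset_closure).isOpen_inter_preimage c.isOpen isOpen_ball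
    have hd : DifferentiableOn ℂ (fun z => G (tau ψ z)) V :=
      hG.differentiableOn.comp (c.tau_diff.mono inter_subset_left) (fun x hx => hx.2)
    have h1 : LS (fun z => (G (tau ψ z)).re) V := fun z hz =>
      (mean_re hV hd hz).mono fun ρ h => h.ge
    refine LS_congr (v := Wn ψ f p s) hV (fun y hy => ?_) h1 z ⟨hz, hb⟩
    rw [hGe _ hy.2, Wn, Pext_ball hy.2]
  · have hpt := c.psi_tau (subset_closure hz)
    have hw : Wn ψ f p s z = ‖f z‖ ^ p := by rw [Wn, Pext_nball hb, hpt]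
    obtain ⟨δ, hδ, hδΩ⟩ := Metric.isOpen_iff.1 c.isOpen z hz
    filter_upwards [pow_LS c.isOpen hf hp z hz, Ioo_mem_nhdsGT hδ] with ρ h1 hρ
    rw [hw]
    refine h1.trans ?_
    have hsp : sphere z |ρ| ⊆ Ω := by
      rw [abs_of_pos hρ.1]
      exact sphere_subset_closedBall.trans ((closedBall_subset_ball hρ.2).trans hδΩ)
    apply Real.circleAverage_mono
    · apply ContinuousOn.circleIntegrable'
      exact (hf.continuousOn.mono hsp).norm.rpow_const (fun x _ => Or.inr hp.le)
    · exact ContinuousOn.circleIntegrable' ((Wn_cont c hp hf hs0 hs1).mono hsp)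
    · intro x hx
      exact Wn_ge c hp hf hs0 hs1 x (hsp hx)
lemma Ex.le_limsup (e : Ex u Ω) {ν : Measure ℂ} (hν : IsRieszMeasure u Ω ν) {g : ℂ → ℝ≥0∞}
    {A : ℝ → ℝ≥0∞}
    (h : ∀ᶠ r in 𝓝[<] (0:ℝ), ∫⁻ z in {z | z ∈ Ω ∧ u z < r}, g z ∂ν ≤ A r) :
    ∫⁻ z, g z ∂ν ≤ limsup A (𝓝[<] (0:ℝ)) := by
  set B : ℕ → Set ℂ := fun n => {z | z ∈ Ω ∧ u z < -(1 / ((n:ℝ) + 1))}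
  have hmono : Monotone B := by
    intro n m hnm z hz
    refine ⟨hz.1, hz.2.trans_le ?_⟩
    have : 1 / ((m:ℝ) + 1) ≤ 1 / ((n:ℝ) + 1) := by gcongr
    linarith
  have hU : ⋃ n, B n = Ω := by
    ext z
    simp only [mem_iUnion]
    constructor
    · rintro ⟨n, h, _⟩; exact h
    · intro hz
      obtain ⟨n, hn⟩ := exists_nat_one_div_lt (show (0:ℝ) < - u z by linarith [e.neg z hz])
      exact ⟨n, hz, by linarith⟩
  have h1 : ∫⁻ z, g z ∂ν = ⨆ n, ∫⁻ z in B n, g z ∂ν := by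
    rw [← setLIntegral_iUnion_of_directed _ hmono.directed_le, hU,
      Measure.restrict_eq_self_of_ae_mem (e.cover hν)]
  rw [h1]
  refine iSup_le fun n => ?_
  apply le_limsup_of_frequently_le
  · apply Eventually.frequently
    have hn : -(1 / ((n:ℝ) + 1)) < 0 := by
      have : 0 < 1 / ((n:ℝ) + 1) := by positivity
      linarith
    filter_upwards [h, Ioo_mem_nhdsLT hn] with r hr hr2
    refine le_trans (lintegral_mono_set ?_) hr
    exact fun z hz => ⟨hz.1, hz.2.trans hr2.1⟩
  · isBoundedDefault

end

/-- For `f ∈ H^p(Ω)` with nontangential boundary value function `f*`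
(defined `σ`-a.e. on `∂Ω`): `f ∈ H^p_u(Ω)` iff `f* ∈ L^p(μ_u)`, and
`‖f*‖_{L^p(μ_u)} = ‖f‖_{H^p_u(Ω)}`. -/
theorem stmt9 (Ω : Set ℂ) (hΩ : AnalyticJordanDomain Ω)
    (u : ℂ → ℝ) (hu : IsExhaustion u Ω)
    (ν : Measure ℂ) (hν : IsRieszMeasure u Ω ν) (hfin : ν Set.univ < ⊤)
    (μfam : ℝ → Measure ℂ) (hμ : ∀ r : ℝ, r < 0 → IsMAMeasure u Ω ν r (μfam r))
    (μb : Measure ℂ) (hμb : IsBoundaryMA μfam μb)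
    (p : ℝ) (hp : 1 ≤ p)
    (f : ℂ → ℂ) (hf : MemHClassical p Ω f)
    (fstar : ℂ → ℂ) (hfstar : ∀ᵐ ξ ∂(arcLen Ω), NTLim Ω f ξ (fstar ξ)) :
    (MemPS p Ω μfam f ↔
      ∫⁻ ξ, ENNReal.ofReal (‖fstar ξ‖ ^ p) ∂μb < ⊤) ∧
    (∫⁻ ξ, ENNReal.ofReal (‖fstar ξ‖ ^ p) ∂μb) ^ (1/p) = psNorm p μfam f := by
  have hp0 : 0 < p := by linarith
  have hνf : IsFiniteMeasure ν := ⟨hfin⟩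
  obtain ⟨U, ψ, oU, sub, dif, inj, im, fr⟩ := hΩ.analyticBoundary
  have c : CM Ω U ψ := ⟨oU, sub, dif, inj, im, fr⟩
  have e : Ex u Ω := ⟨hΩ.isOpen, ⟨0, hΩ.zero_mem⟩, hu.neg, hu.subh.1, hu.exh⟩
  have hfd := hf.1
  obtain ⟨C, hd⟩ := c.hd hp0 hf hfstar
  have hmub := c.mub_eq hp0 hfd hfstar (fun Φ hΦ => e.mub_lint c hν hμ hμb hΦ)
  have hcf : ContinuousOn (fun z => ‖f z‖ ^ p) Ω :=
    hfd.continuousOn.norm.rpow_const (fun x _ => Or.inr hp0.le)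
  have hkey : psNormPow p μfam f = ∫⁻ ξ, ENNReal.ofReal (‖fstar ξ‖ ^ p) ∂μb := by
    rw [hmub]
    set φ : ℂ → ℝ := fun ζ => ‖fstar (ψ ζ)‖ ^ p
    have hci : CircleIntegrable φ 0 1 := hd.int
    apply le_antisymm
    · -- upper bound
      obtain ⟨G, hG, hGe⟩ := c.harm hci
      apply limsup_le_of_le (by isBoundedDefault)
      filter_upwards [self_mem_nhdsWithin] with r hr
      have hr : r < 0 := hr
      have hm := e.map hν hμ hr
      have := hm.fin
      have hsupp : ∀ᵐ z ∂μfam r, z ∈ {z | z ∈ Ω ∧ u z = r} := hm.supp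
      set H : ℂ → ℝ := fun z => Pz 1 φ (tau ψ z)
      have hHc : ContinuousOn H Ω :=
        (Complex.continuous_re.comp_continuousOn hG.continuousOn).congr (fun z hz => (hGe z hz).symm)
      have hH0 : ∀ z ∈ Ω, 0 ≤ H z := fun z hz =>
        le_trans (by positivity) (hd.maj (c.tau_ball hz))
      have hHf : ∀ z ∈ Ω, ‖f z‖ ^ p ≤ H z := fun z hz => by
        have := hd.maj (c.tau_ball hz)
        rwa [c.psi_tau (subset_closure hz)] at this
      have hK := e.Kle hr
      have hio : ∀ N : Measure ℂ, IsFiniteMeasure N → IntegrableOn H {z | z ∈ Ω ∧ u z ≤ r} N :=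
        fun N _ => (hHc.mono fun z hz => hz.1).integrableOn_compact hK
      have iH : Integrable H (μfam r) := by
        have h1 := hio (μfam r) inferInstance
        have hs' : ∀ᵐ z ∂μfam r, z ∈ {z | z ∈ Ω ∧ u z ≤ r} :=
          hsupp.mono fun z hz => ⟨hz.1, hz.2.le⟩
        rwa [IntegrableOn, Measure.restrict_eq_self_of_ae_mem hs'] at h1
      have hBm : MeasurableSet {z | z ∈ Ω ∧ u z < r} :=
        (e.cont.isOpen_inter_preimage e.op isOpen_Iio).measurableSet
      calc ∫⁻ z, ENNReal.ofReal (‖f z‖ ^ p) ∂(μfam r) ≤ ∫⁻ z, ENNReal.ofReal (H z) ∂(μfam r) := by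
            apply lintegral_mono_ae
            filter_upwards [hsupp] with z hz using ENNReal.ofReal_le_ofReal (hHf z hz.1)
        _ = ENNReal.ofReal (∫ z, H z ∂(μfam r)) := by
            rw [ofReal_integral_eq_lintegral_ofReal iH]
            filter_upwards [hsupp] with z hz using hH0 z hz.1
        _ = ENNReal.ofReal (∫ z in {z | z ∈ Ω ∧ u z < r}, H z ∂ν) := by
            rw [e.harm_eq hν hr hm hG hGe]
        _ = ∫⁻ z in {z | z ∈ Ω ∧ u z < r}, ENNReal.ofReal (H z) ∂ν := by
            rw [ofReal_integral_eq_lintegral_ofReal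
              (show IntegrableOn _ {z | z ∈ Ω ∧ u z < r} ν from
                (hio ν inferInstance).mono_set (fun z hz => ⟨hz.1, hz.2.le⟩))]
            filter_upwards [ae_restrict_mem hBm] with z hz using hH0 z hz.1
        _ ≤ ∫⁻ z, ENNReal.ofReal (H z) ∂ν := setLIntegral_le_lintegral _ _
        _ = _ := by
            apply lintegral_congr_ae
            filter_upwards [e.cover hν] with z hz
            exact (PL_eq hci (fun ζ _ => by positivity) (c.tau_ball hz)).symm
    · -- lower bound
      have hWc : ∀ n, ContinuousOn (Wn ψ f p (sn n)) Ω := fun n =>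
        Wn_cont c hp0 hfd (sn_pos n) (sn_lt n)
      have hWg : ∀ n, ∀ z ∈ Ω, ‖f z‖ ^ p ≤ Wn ψ f p (sn n) z := fun n =>
        Wn_ge c hp0 hfd (sn_pos n) (sn_lt n)
      have hW0 : ∀ n, ∀ z ∈ Ω, 0 ≤ Wn ψ f p (sn n) z := fun n z hz =>
        le_trans (by positivity) (hWg n z hz)
      have hn : ∀ n, ∫⁻ z, ENNReal.ofReal (Wn ψ f p (sn n) z) ∂ν ≤ psNormPow p μfam f := by
        intro n
        apply e.le_limsup hν
        have hKc : IsCompact (ψ '' closedBall 0 (sn n)) :=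
          (isCompact_closedBall _ _).image_of_continuousOn
            (c.psi_contOn.mono (closedBall_subset_closedBall (sn_lt n).le))
        have hKΩ : ψ '' closedBall 0 (sn n) ⊆ Ω := by
          rintro _ ⟨a, ha, rfl⟩
          exact c.psi_ball (closedBall_subset_ball (sn_lt n) ha)
        filter_upwards [e.exits hKc hKΩ, self_mem_nhdsWithin] with r hrK hr
        have hr : r < 0 := hr
        have hm := e.map hν hμ hr
        have := hm.fin
        have hsupp : ∀ᵐ z ∂μfam r, z ∈ {z | z ∈ Ω ∧ u z = r} := hm.supp
        have hK := e.Kle hr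
        have hio : ∀ N : Measure ℂ, IsFiniteMeasure N →
            IntegrableOn (Wn ψ f p (sn n)) {z | z ∈ Ω ∧ u z ≤ r} N :=
          fun N _ => ((hWc n).mono fun z hz => hz.1).integrableOn_compact hK
        have iW : Integrable (Wn ψ f p (sn n)) (μfam r) := by
          have h1 := hio (μfam r) inferInstance
          have hs' : ∀ᵐ z ∂μfam r, z ∈ {z | z ∈ Ω ∧ u z ≤ r} :=
            hsupp.mono fun z hz => ⟨hz.1, hz.2.le⟩
          rwa [IntegrableOn, Measure.restrict_eq_self_of_ae_mem hs'] at h1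
        have hBm : MeasurableSet {z | z ∈ Ω ∧ u z < r} :=
          (e.cont.isOpen_inter_preimage e.op isOpen_Iio).measurableSet
        calc ∫⁻ z in {z | z ∈ Ω ∧ u z < r}, ENNReal.ofReal (Wn ψ f p (sn n) z) ∂ν
            = ENNReal.ofReal (∫ z in {z | z ∈ Ω ∧ u z < r}, Wn ψ f p (sn n) z ∂ν) := by
              rw [ofReal_integral_eq_lintegral_ofReal
                (show IntegrableOn _ {z | z ∈ Ω ∧ u z < r} ν from
                (hio ν inferInstance).mono_set (fun z hz => ⟨hz.1, hz.2.le⟩))]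
              filter_upwards [ae_restrict_mem hBm] with z hz using hW0 n z hz.1
          _ ≤ ENNReal.ofReal (∫ z, Wn ψ f p (sn n) z ∂(μfam r)) :=
              ENNReal.ofReal_le_ofReal (e.claimB hν hr hm (hWc n)
                (Wn_LS c hp0 hfd (sn_pos n) (sn_lt n)))
          _ = ∫⁻ z, ENNReal.ofReal (Wn ψ f p (sn n) z) ∂(μfam r) := by
              rw [ofReal_integral_eq_lintegral_ofReal iW]
              filter_upwards [hsupp] with z hz using hW0 n z hz.1
          _ = ∫⁻ z, ENNReal.ofReal (‖f z‖ ^ p) ∂(μfam r) := by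
              apply lintegral_congr_ae
              filter_upwards [hsupp] with z hz
              have hpt := c.psi_tau (subset_closure hz.1)
              have hnb : tau ψ z ∉ ball (0:ℂ) (sn n) := by
                intro hb
                have := hrK z ⟨tau ψ z, ball_subset_closedBall hb, hpt⟩
                exact absurd hz.2 this.ne
              rw [Wn, Pext_nball hnb, hpt]
      calc ∫⁻ z, PL (fun θ => ENNReal.ofReal (φ (circleMap 0 1 θ))) (tau ψ z) ∂ν
          ≤ ∫⁻ z, liminf (fun n => ENNReal.ofReal (Wn ψ f p (sn n) z)) atTop ∂ν := by
            apply lintegral_mono_ae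
            filter_upwards [e.cover hν] with z hz using hd.fatou (c.tau_ball hz)
        _ ≤ liminf (fun n => ∫⁻ z, ENNReal.ofReal (Wn ψ f p (sn n) z) ∂ν) atTop := by
            apply lintegral_liminf_le'
            intro n
            apply AEMeasurable.ennreal_ofReal
            have h1 := (hWc n).aemeasurable (μ := ν) e.op.measurableSet
            rwa [Measure.restrict_eq_self_of_ae_mem (e.cover hν)] at h1
        _ ≤ psNormPow p μfam f := by
            refine liminf_le_of_le (by isBoundedDefault) (fun b hb => ?_)
            obtain ⟨n, hb⟩ := hb.exists
            exact hb.trans (hn n)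
  refine ⟨?_, ?_⟩
  · rw [MemPS, hkey]
    exact ⟨fun h => h.2, fun h => ⟨hfd, h⟩⟩
  · rw [psNorm, hkey]

end
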